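/- Under the multi-layer network assumptions, there exist parameters (ε̃_n, B̃), with ε̃_n n^{1/4} → 0 as n → ∞, such that almost surely for all large n, every one of the matrices X₀, X₁, …, X_L is (ε̃_n, B̃)-orthonormal. -/

import Mathlib

/-!
Corollary (propagation of approximate orthonormality through the network): under the
multi-layer network assumptions there are parameters `(ε̃_n, B̃)` with `ε̃_n n^{1/4} → 0`
such that almost surely, for all large `n`, every layer matrix `X₀, …, X_L` is
`(ε̃_n, B̃)`-orthonormal.
-/

open MeasureTheory ProbabilityTheory Filter Topology Matrix

noncomputable abbrev stdGaussian : Measure ℝ := gaussianReal 0 1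

noncomputable abbrev gaussianVec (d : ℕ) : Measure (Fin d → ℝ) :=
  Measure.pi fun _ => stdGaussian

noncomputable abbrev gaussianMat (a b : ℕ) : Measure (Fin a → Fin b → ℝ) :=
  Measure.pi fun _ => gaussianVec b

/-- ℓ₂→ℓ₂ operator norm of a real matrix. -/
noncomputable def opNorm {m n : ℕ} (X : Matrix (Fin m) (Fin n) ℝ) : ℝ :=
  ‖LinearMap.toContinuousLinearMap (Matrix.toEuclideanLin X)‖

/-- `(ε,B)`-orthonormality of the columns of a matrix. -/
def IsOrthonormal {d n : ℕ} (ε B : ℝ) (X : Matrix (Fin d) (Fin n) ℝ) : Prop :=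
  (∀ α : Fin n, |(∑ i, X i α ^ 2) - 1| ≤ ε) ∧
  (∀ α β : Fin n, α ≠ β → |∑ i, X i α * X i β| ≤ ε) ∧
  opNorm X ≤ B ∧
  ∑ α : Fin n, ((∑ i, X i α ^ 2) - 1) ^ 2 ≤ B ^ 2

open Classical in
/-- Integral of `f` against the empirical eigenvalue distribution of a symmetric matrix. -/
noncomputable def esd {n : ℕ} (M : Matrix (Fin n) (Fin n) ℝ) (f : ℝ → ℝ) : ℝ :=
  if h : M.IsHermitian then (n : ℝ)⁻¹ * ∑ α, f (h.eigenvalues α) else 0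

/-- The layers `X_ℓ = σ(W_ℓ X_{ℓ-1})/√d_ℓ` of the network. -/
noncomputable def netLayer (σ : ℝ → ℝ) (d : ℕ → ℕ) (n : ℕ)
    (W : (ℓ : ℕ) → Fin (d (ℓ + 1)) → Fin (d ℓ) → ℝ)
    (X0 : Matrix (Fin (d 0)) (Fin n) ℝ) : (ℓ : ℕ) → Matrix (Fin (d ℓ)) (Fin n) ℝ
  | 0 => X0
  | ℓ + 1 => (Real.sqrt (d (ℓ + 1)))⁻¹ • ((Matrix.of (W ℓ) * netLayer σ d n W X0 ℓ).map σ)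

/-!
Given a fixed `(ε, B)`-orthonormal input `X`, the rows of `W` are independent Gaussian vectors, so
the entries of `Yᵀ Y` for the next layer `Y = σ(W X)/√d` are averages of `d` independent copies of
`σ(wᵀ x_α) σ(wᵀ x_β)`.

* Their means are `δ_αβ + O(ε)`: for orthonormal columns they would be `E[σ(ξ)²] = 1` and
  `E[σ(ξ)]² = 0`, and `σ` is Lipschitz.
* Their fluctuations are sub-exponential, by Gaussian concentration for gradients (Maurey–Pisier),
  with constants that depend only on `B` and the Lipschitz constant of `σ`. A union bound over the
  `n²` entries gives an error of `n^(-3/8)`, which is `o(n^(-1/4))`, while an `ε`-net argument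
  over the unit sphere controls the operator norm and `∑ (‖y_α‖² - 1)²`.

A layer step therefore fails with probability `O(n⁻²)`; conditioning on the previous layers and the
Borel–Cantelli lemma finish the induction.
-/

theorem ofReal_exp_integral_le_lintegral {α : Type*} [MeasurableSpace α] {ν : Measure α}
    [IsProbabilityMeasure ν] {f : α → ℝ} (hf : Integrable f ν) :
    ENNReal.ofReal (Real.exp (∫ a, f a ∂ν)) ≤ ∫⁻ a, ENNReal.ofReal (Real.exp (f a)) ∂ν := by
  have exp_nonneg : 0 ≤ᵐ[ν] fun a => Real.exp (f a) := ae_of_all _ fun a => (Real.exp_pos _).le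
  by_cases h : Integrable (fun a => Real.exp (f a)) ν
  · rw [← ofReal_integral_eq_lintegral_ofReal h exp_nonneg]
    exact ENNReal.ofReal_le_ofReal <| convexOn_exp.map_integral_le Real.continuous_exp.continuousOn
      isClosed_univ (ae_of_all _ fun _ => Set.mem_univ _) hf h
  · have : ∫⁻ a, ENNReal.ofReal (Real.exp (f a)) ∂ν = ⊤ := not_not.1 fun hne => h <|
      (lintegral_ofReal_ne_top_iff_integrable
        (Real.continuous_exp.comp_aestronglyMeasurable hf.1) exp_nonneg).1 hne
    exact this ▸ le_top

theorem ofReal_exp_sub_integral_le_lintegral {α : Type*} [MeasurableSpace α] {ν : Measure α}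
    [IsProbabilityMeasure ν] {g : α → ℝ} (hg : Integrable g ν) (t a : ℝ) :
    ENNReal.ofReal (Real.exp (t * (a - ∫ z, g z ∂ν))) ≤
      ∫⁻ x, ENNReal.ofReal (Real.exp (t * (a - g x))) ∂ν := by
  have := ofReal_exp_integral_le_lintegral (((integrable_const a).sub hg).const_mul t)
  simpa [integral_const_mul, integral_sub (integrable_const a) hg] using this

/-- The uniform distribution of an angle over the first quadrant. -/
noncomputable def quarterTurn : Measure ℝ := volume[|Set.Ioc 0 (Real.pi / 2)]

instance : IsProbabilityMeasure quarterTurn :=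
  cond_isProbabilityMeasure_of_finite (by simp [Real.pi_pos]) (by simp)

theorem integrable_quarterTurn {g : ℝ → ℝ} (hg : Continuous g) : Integrable g quarterTurn :=
  (((hg.intervalIntegrable 0 (Real.pi / 2)).1)).smul_measure (by simp [Real.pi_pos])

theorem integral_quarterTurn (g : ℝ → ℝ) :
    ∫ θ, g θ ∂quarterTurn = (Real.pi / 2)⁻¹ * ∫ θ in 0..Real.pi / 2, g θ := by
  rw [quarterTurn, ProbabilityTheory.cond, integral_smul_measure,
    intervalIntegral.integral_of_le (by positivity)]
  simp [ENNReal.toReal_ofReal Real.pi_div_two_pos.le]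

section MaureyPisier

variable {E : Type*} [NormedAddCommGroup E] [NormedSpace ℝ E]
variable {f : E → ℝ} {f' : E → StrongDual ℝ E}

theorem sub_eq_integral_quarterTurn (hf : ∀ x, HasFDerivAt f (f' x) x) (hf' : Continuous f')
    (x y : E) :
    f y - f x = ∫ θ, Real.pi / 2 * f' (Real.cos θ • x + Real.sin θ • y)
      (-Real.sin θ • x + Real.cos θ • y) ∂quarterTurn := by
  have hpath (θ : ℝ) : HasDerivAt (fun θ : ℝ => Real.cos θ • x + Real.sin θ • y)
      (-Real.sin θ • x + Real.cos θ • y) θ :=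
    ((Real.hasDerivAt_cos θ).smul_const x).add ((Real.hasDerivAt_sin θ).smul_const y)
  have hcont : Continuous fun θ : ℝ => f' (Real.cos θ • x + Real.sin θ • y)
      (-Real.sin θ • x + Real.cos θ • y) := by fun_prop
  have hftc := intervalIntegral.integral_eq_sub_of_hasDerivAt (a := 0) (b := Real.pi / 2)
    (fun θ _ => (hf _).comp_hasDerivAt θ (hpath θ)) (hcont.intervalIntegrable _ _)
  simp only [Function.comp_apply, Real.cos_pi_div_two, Real.sin_pi_div_two, Real.cos_zero,
    Real.sin_zero, zero_smul, one_smul, zero_add, add_zero] at hftc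
  rw [integral_const_mul, integral_quarterTurn, hftc,
    mul_inv_cancel_left₀ (by positivity)]

/- Jensen's inequality is applied along the quarter circle joining `x` to `y`. -/
theorem ofReal_exp_sub_le_lintegral_rotation (hf : ∀ x, HasFDerivAt f (f' x) x)
    (hf' : Continuous f') (t : ℝ) (x y : E) :
    ENNReal.ofReal (Real.exp (t * (f y - f x))) ≤
      ∫⁻ θ, ENNReal.ofReal (Real.exp (t * (Real.pi / 2) *
        f' (ContinuousLinearMap.rotation θ (x, y)).1 (ContinuousLinearMap.rotation θ (x, y)).2))
        ∂quarterTurn := by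
  simp_rw [mul_assoc t]
  rw [sub_eq_integral_quarterTurn hf hf', ← integral_const_mul]
  exact ofReal_exp_integral_le_lintegral <| integrable_quarterTurn (by fun_prop)

variable [MeasurableSpace E] [BorelSpace E] {μ : Measure E} [IsGaussian μ]

theorem lintegral_exp_dual_of_isGaussian {L : StrongDual ℝ E} (hL : μ[L] = 0) :
    ∫⁻ y, ENNReal.ofReal (Real.exp (L y)) ∂μ = ENNReal.ofReal (Real.exp (Var[L; μ] / 2)) := by
  have hmap := IsGaussian.map_eq_gaussianReal (μ := μ) L
  have hint := integrable_exp_mul_gaussianReal (μ := 0) (v := Var[L; μ].toNNReal) 1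
  have hmgf := congrFun (mgf_id_gaussianReal (μ := 0) (v := Var[L; μ].toNNReal)) 1
  rw [hL] at hmap
  simp only [mgf, id, one_mul] at hint hmgf
  rw [← lintegral_map (f := fun s : ℝ => ENNReal.ofReal (Real.exp s)) (by fun_prop)
      L.continuous.measurable, hmap,
    ← ofReal_integral_eq_lintegral_ofReal hint (ae_of_all _ fun s => (Real.exp_pos _).le), hmgf]
  simp [variance_nonneg]

variable [CompleteSpace E] [SecondCountableTopology E]

theorem lintegral_lintegral_rotation (hμ : μ[id] = 0) {Φ : E × E → ENNReal}
    (hΦ : Continuous Φ) :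
    ∫⁻ y, ∫⁻ x, ∫⁻ θ, Φ (ContinuousLinearMap.rotation θ (x, y)) ∂quarterTurn ∂μ ∂μ =
      ∫⁻ x, ∫⁻ y, Φ (x, y) ∂μ ∂μ := by
  have hcont : Continuous fun q : (E × E) × ℝ => Φ (ContinuousLinearMap.rotation q.2 q.1) := by
    simp only [ContinuousLinearMap.rotation_apply]
    fun_prop
  calc ∫⁻ y, ∫⁻ x, ∫⁻ θ, Φ (ContinuousLinearMap.rotation θ (x, y)) ∂quarterTurn ∂μ ∂μ
      = ∫⁻ p, ∫⁻ θ, Φ (ContinuousLinearMap.rotation θ p) ∂quarterTurn ∂(μ.prod μ) :=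
        (lintegral_prod_symm _ hcont.measurable.lintegral_prod_right'.aemeasurable).symm
    _ = ∫⁻ θ, ∫⁻ p, Φ (ContinuousLinearMap.rotation θ p) ∂(μ.prod μ) ∂quarterTurn :=
        lintegral_lintegral_swap hcont.measurable.aemeasurable
    _ = ∫⁻ _θ, ∫⁻ p, Φ p ∂(μ.prod μ) ∂quarterTurn := by
        refine lintegral_congr fun θ => ?_
        conv_rhs => rw [← IsGaussian.map_rotation_eq_self hμ θ]
        rw [lintegral_map hΦ.measurable (ContinuousLinearMap.continuous _).measurable]
    _ = ∫⁻ x, ∫⁻ y, Φ (x, y) ∂μ ∂μ := by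
        rw [lintegral_const, measure_univ, mul_one, lintegral_prod _ hΦ.measurable.aemeasurable]

theorem lintegral_exp_sub_integral_le_of_isGaussian (hμ : μ[id] = 0)
    (hf : ∀ x, HasFDerivAt f (f' x) x) (hf' : Continuous f') (hint : Integrable f μ) (t : ℝ) :
    ∫⁻ x, ENNReal.ofReal (Real.exp (t * (f x - ∫ z, f z ∂μ))) ∂μ ≤
      ∫⁻ x, ENNReal.ofReal (Real.exp (t ^ 2 * (Real.pi ^ 2 / 8) * Var[f' x; μ])) ∂μ := by
  have hmean (L : StrongDual ℝ E) : μ[L] = 0 := by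
    rw [L.integral_comp_id_comm IsGaussian.integrable_id]
    simpa using congrArg L hμ
  calc ∫⁻ y, ENNReal.ofReal (Real.exp (t * (f y - ∫ z, f z ∂μ))) ∂μ
      ≤ ∫⁻ y, ∫⁻ x, ENNReal.ofReal (Real.exp (t * (f y - f x))) ∂μ ∂μ :=
        lintegral_mono fun y => ofReal_exp_sub_integral_le_lintegral hint t (f y)
    _ ≤ _ := lintegral_mono fun y => lintegral_mono fun x =>
        ofReal_exp_sub_le_lintegral_rotation hf hf' t x y
    _ = ∫⁻ x, ∫⁻ y, ENNReal.ofReal (Real.exp (t * (Real.pi / 2) * f' x y)) ∂μ ∂μ :=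
        lintegral_lintegral_rotation hμ
          (Φ := fun p => ENNReal.ofReal (Real.exp (t * (Real.pi / 2) * f' p.1 p.2)))
          (ENNReal.continuous_ofReal.comp (by fun_prop))
    _ = _ := by
        refine lintegral_congr fun x => ?_
        refine (lintegral_exp_dual_of_isGaussian (hmean ((t * (Real.pi / 2)) • f' x))).trans ?_
        rw [show ⇑((t * (Real.pi / 2)) • f' x) = (t * (Real.pi / 2)) • ⇑(f' x) from rfl,
          variance_smul]
        congr 2
        ring

end MaureyPisier

section GaussianVector

variable {d n : ℕ}

theorem map_toLp_gaussianVec :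
    (gaussianVec d).map (WithLp.toLp 2) =
      ProbabilityTheory.stdGaussian (EuclideanSpace ℝ (Fin d)) :=
  map_pi_eq_stdGaussian

instance isGaussian_gaussianVec : IsGaussian (gaussianVec d) := by
  have : IsGaussian ((gaussianVec d).map (EuclideanSpace.equiv (Fin d) ℝ).symm) :=
    map_toLp_gaussianVec (d := d) ▸ inferInstance
  exact (isGaussian_map_equiv_iff _).1 this

theorem integral_id_gaussianVec : (gaussianVec d)[id] = 0 := by
  ext i
  simp [eval_integral (fun _ => integrable_eval IsGaussian.integrable_id) i, integral_eval]

theorem covariance_dotProduct_gaussianVec (x z : Fin d → ℝ) :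
    cov[fun w => w ⬝ᵥ x, fun w => w ⬝ᵥ z; gaussianVec d] = x ⬝ᵥ z := by
  have h := covarianceBilin_apply_eq_cov
    (μ := ProbabilityTheory.stdGaussian (EuclideanSpace ℝ (Fin d)))
    IsGaussian.memLp_two_id (WithLp.toLp 2 x) (WithLp.toLp 2 z)
  rw [covarianceBilin_stdGaussian, ← map_toLp_gaussianVec, innerSL_apply_apply,
    covariance_map_fun (by fun_prop) (by fun_prop) (by fun_prop)] at h
  simpa [EuclideanSpace.inner_eq_star_dotProduct, dotProduct_comm] using h.symm

theorem variance_dotProduct_gaussianVec (x : Fin d → ℝ) :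
    Var[fun w => w ⬝ᵥ x; gaussianVec d] = x ⬝ᵥ x := by
  rw [← covariance_self (by fun_prop), covariance_dotProduct_gaussianVec]

theorem hasGaussianLaw_vecMul (X : Matrix (Fin d) (Fin n) ℝ) :
    HasGaussianLaw (fun w => w ᵥ* X) (gaussianVec d) :=
  IsGaussian.hasGaussianLaw_id.map_fun (LinearMap.toContinuousLinearMap (Matrix.vecMulLinear X))

instance isGaussian_map_vecMul (X : Matrix (Fin d) (Fin n) ℝ) :
    IsGaussian ((gaussianVec d).map fun w => w ᵥ* X) :=
  (hasGaussianLaw_vecMul X).isGaussian_map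

theorem integral_id_map_vecMul (X : Matrix (Fin d) (Fin n) ℝ) :
    ((gaussianVec d).map fun w => w ᵥ* X)[id] = 0 := by
  have hmean : ∫ w, w ∂gaussianVec d = 0 := integral_id_gaussianVec
  rw [integral_map (by fun_prop) (by fun_prop)]
  exact ((LinearMap.toContinuousLinearMap (Matrix.vecMulLinear X)).integral_comp_id_comm
    IsGaussian.integrable_id).trans (by rw [hmean, map_zero])

theorem variance_dotProduct_map_vecMul (X : Matrix (Fin d) (Fin n) ℝ) (p : Fin n → ℝ) :
    Var[fun u => u ⬝ᵥ p; (gaussianVec d).map fun w => w ᵥ* X] = X *ᵥ p ⬝ᵥ X *ᵥ p := by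
  rw [variance_map (by fun_prop) (by fun_prop), ← variance_dotProduct_gaussianVec (X *ᵥ p)]
  simp only [Function.comp_def, dotProduct_mulVec]

theorem integral_dotProduct_gaussianVec (x : Fin d → ℝ) :
    ∫ w, w ⬝ᵥ x ∂gaussianVec d = 0 := by
  simp only [dotProduct]
  rw [integral_finsetSum _ fun i _ =>
    (integrable_eval IsGaussian.integrable_id).mul_const _]
  simp [integral_mul_const, integral_eval]

theorem hasGaussianLaw_dotProduct (x : Fin d → ℝ) :
    HasGaussianLaw (fun w => w ⬝ᵥ x) (gaussianVec d) :=
  (hasGaussianLaw_vecMul (Matrix.replicateCol (Fin 1) x)).eval 0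

theorem dotProduct_self_nonneg {ι : Type*} [Fintype ι] (x : ι → ℝ) : 0 ≤ x ⬝ᵥ x :=
  Finset.sum_nonneg fun i _ => mul_self_nonneg (x i)

theorem map_dotProduct_gaussianVec (x : Fin d → ℝ) :
    (gaussianVec d).map (fun w => w ⬝ᵥ x) = stdGaussian.map fun s => √(x ⬝ᵥ x) * s := by
  rw [(hasGaussianLaw_dotProduct x).map_eq_gaussianReal, gaussianReal_map_const_mul,
    integral_dotProduct_gaussianVec, variance_dotProduct_gaussianVec]
  congr 1
  · simp
  · ext
    simp [dotProduct_self_nonneg]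

theorem indepFun_dotProduct_gaussianVec {x z : Fin d → ℝ} (h : x ⬝ᵥ z = 0) :
    IndepFun (fun w => w ⬝ᵥ x) (fun w => w ⬝ᵥ z) (gaussianVec d) :=
  ((hasGaussianLaw_vecMul (Matrix.of ![x, z])ᵀ).prodMk 0 1).indepFun_of_covariance_eq_zero
    (by rw [← h, ← covariance_dotProduct_gaussianVec x z]; rfl)

theorem integral_comp_dotProduct_gaussianVec (x : Fin d → ℝ) {f : ℝ → ℝ} (hf : Measurable f) :
    ∫ w, f (w ⬝ᵥ x) ∂gaussianVec d = ∫ s, f (√(x ⬝ᵥ x) * s) ∂stdGaussian := by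
  rw [← integral_map (φ := fun w => w ⬝ᵥ x) (by fun_prop) hf.aestronglyMeasurable,
    map_dotProduct_gaussianVec, integral_map (by fun_prop) hf.aestronglyMeasurable]

theorem lintegral_comp_dotProduct_gaussianVec (x : Fin d → ℝ) {f : ℝ → ENNReal}
    (hf : Measurable f) :
    ∫⁻ w, f (w ⬝ᵥ x) ∂gaussianVec d = ∫⁻ s, f (√(x ⬝ᵥ x) * s) ∂stdGaussian := by
  rw [← lintegral_map (g := fun w => w ⬝ᵥ x) hf (by fun_prop), map_dotProduct_gaussianVec,
    lintegral_map hf (by fun_prop)]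

end GaussianVector

section OperatorNorm

variable {d n : ℕ} (X : Matrix (Fin d) (Fin n) ℝ)

theorem opNorm_nonneg : 0 ≤ opNorm X := norm_nonneg _

theorem dotProduct_mulVec_self_le (p : Fin n → ℝ) :
    X *ᵥ p ⬝ᵥ X *ᵥ p ≤ opNorm X ^ 2 * (p ⬝ᵥ p) := by
  have h := pow_le_pow_left₀ (norm_nonneg _)
    ((LinearMap.toContinuousLinearMap (Matrix.toEuclideanLin X)).le_opNorm (WithLp.toLp 2 p)) 2
  rw [mul_pow, EuclideanSpace.real_norm_sq_eq, EuclideanSpace.real_norm_sq_eq] at h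
  simpa [opNorm, dotProduct, pow_two] using h

end OperatorNorm

section Net

open Metric Module
open scoped RealInnerProductSpace

variable {E : Type*} [NormedAddCommGroup E]

theorem packingNumber_one_closedBall_two_le [NormedSpace ℝ E] [FiniteDimensional ℝ E] :
    packingNumber 1 (closedBall (0 : E) 2) ≤ 5 ^ finrank ℝ E := by
  refine iSup₂_le fun C hC => iSup_le fun hsep => ?_
  by_contra! hlt
  obtain ⟨s, hsC, hcard⟩ := Set.exists_subset_encard_eq (Order.add_one_le_of_lt hlt)
  have hfin : s.Finite := Set.finite_of_encard_eq_coe (k := 5 ^ finrank ℝ E + 1) (by simp [hcard])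
  have hle := Besicovitch.card_le_of_separated hfin.toFinset
    (fun c hc => mem_closedBall_zero_iff.1 (hC (hsC (hfin.mem_toFinset.1 hc))))
    fun c hc c' hc' hne => by
      have h : 1 < edist c c' :=
        hsep (hsC (hfin.mem_toFinset.1 hc)) (hsC (hfin.mem_toFinset.1 hc')) hne
      rw [edist_dist, dist_eq_norm] at h
      exact (ENNReal.one_lt_ofReal.1 h).le
  rw [hfin.encard_eq_coe_toFinset_card] at hcard
  have : hfin.toFinset.card = 5 ^ finrank ℝ E + 1 := by exact_mod_cast hcard
  omega

variable (E) in
theorem exists_finset_card_le_forall_norm_sub_le_half [NormedSpace ℝ E] [FiniteDimensional ℝ E] :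
    ∃ N : Finset E, N.card ≤ 5 ^ finrank ℝ E ∧ (∀ v ∈ N, ‖v‖ ≤ 1) ∧
      ∀ x : E, ‖x‖ ≤ 1 → ∃ v ∈ N, ‖x - v‖ ≤ 1 / 2 := by
  classical
  set A := closedBall (0 : E) 2
  have hcov : coveringNumber 1 A ≤ (5 ^ finrank ℝ E : ℕ) :=
    (coveringNumber_le_packingNumber 1 A).trans
      (packingNumber_one_closedBall_two_le.trans_eq (by norm_cast))
  have hne : coveringNumber 1 A ≠ ⊤ := (hcov.trans_lt (ENat.natCast_lt_top _)).ne
  have hfin : (minimalCover 1 A).Finite := finite_minimalCover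
  refine ⟨hfin.toFinset.image fun c => (1 / 2 : ℝ) • c, Finset.card_image_le.trans ?_,
    fun v hv => ?_, fun x hx => ?_⟩
  · rw [← encard_minimalCover hne, hfin.encard_eq_coe_toFinset_card] at hcov
    exact_mod_cast hcov
  · obtain ⟨c, hc, rfl⟩ := Finset.mem_image.1 hv
    have h2 : ‖c‖ ≤ 2 := mem_closedBall_zero_iff.1 (minimalCover_subset (hfin.mem_toFinset.1 hc))
    rw [norm_smul, Real.norm_of_nonneg (by norm_num)]
    linarith
  · have hxA : (2 : ℝ) • x ∈ A := by
      rw [mem_closedBall_zero_iff, norm_smul, Real.norm_of_nonneg (by norm_num)]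
      linarith
    obtain ⟨c, hc, hxc⟩ := isCover_minimalCover hne hxA
    refine ⟨(1 / 2 : ℝ) • c, Finset.mem_image_of_mem _ (hfin.mem_toFinset.2 hc), ?_⟩
    have hdist : ‖(2 : ℝ) • x - c‖ ≤ 1 := by
      have hle : edist ((2 : ℝ) • x) c ≤ 1 := hxc
      rwa [edist_dist, dist_eq_norm, ENNReal.ofReal_le_one] at hle
    rw [show x - (1 / 2 : ℝ) • c = (1 / 2 : ℝ) • ((2 : ℝ) • x - c) by module, norm_smul,
      Real.norm_of_nonneg (by norm_num)]
    linarith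

variable {F : Type*} [NormedAddCommGroup F] {N : Finset E} {τ : ℝ}

theorem norm_le_of_forall_inner_le_of_net [InnerProductSpace ℝ E]
    (hN : ∀ x : E, ‖x‖ ≤ 1 → ∃ v ∈ N, ‖x - v‖ ≤ 1 / 2) {z : E} (h : ∀ v ∈ N, ⟪v, z⟫ ≤ τ) :
    ‖z‖ ≤ 2 * τ := by
  obtain rfl | hz := eq_or_ne z 0
  · obtain ⟨v, hv, -⟩ := hN 0 (by simp)
    simpa using h v hv
  obtain ⟨v, hv, hvz⟩ := hN (‖z‖⁻¹ • z) (norm_smul_inv_norm hz).le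
  have hunit : ⟪‖z‖⁻¹ • z, z⟫ = ‖z‖ := by
    rw [real_inner_smul_left, real_inner_self_eq_norm_sq]
    field
  have hdiff : ⟪‖z‖⁻¹ • z - v, z⟫ ≤ 1 / 2 * ‖z‖ := (real_inner_le_norm _ _).trans (by gcongr)
  rw [inner_sub_left, hunit] at hdiff
  linarith [h v hv]

theorem opNorm_le_of_forall_norm_le_of_net [NormedSpace ℝ E] [NormedSpace ℝ F]
    (hN : ∀ x : E, ‖x‖ ≤ 1 → ∃ v ∈ N, ‖x - v‖ ≤ 1 / 2) {T : E →L[ℝ] F}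
    (h : ∀ v ∈ N, ‖T v‖ ≤ τ) : ‖T‖ ≤ 2 * τ := by
  have hτ : 0 ≤ τ := by
    obtain ⟨v, hv, -⟩ := hN 0 (by simp)
    exact (norm_nonneg _).trans (h v hv)
  have hself : ‖T‖ ≤ τ + ‖T‖ * (1 / 2) := by
    refine T.opNorm_le_of_unit_norm (by positivity) fun x hx => ?_
    obtain ⟨v, hv, hvx⟩ := hN x hx.le
    calc ‖T x‖ = ‖T v + T (x - v)‖ := by rw [map_sub, add_sub_cancel]
      _ ≤ ‖T v‖ + ‖T (x - v)‖ := norm_add_le _ _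
      _ ≤ τ + ‖T‖ * (1 / 2) := add_le_add (h v hv) ((T.le_opNorm _).trans (by gcongr))
  linarith

variable {Ω : Type*} [MeasurableSpace Ω] {μ : Measure Ω} {p : ENNReal}

theorem measure_le_five_pow_mul_of_forall_net [NormedSpace ℝ E] [FiniteDimensional ℝ E]
    {A : E → Set Ω} (hA : ∀ v, ‖v‖ ≤ 1 → μ (A v) ≤ p) {S : Set Ω}
    (hS : ∀ N : Finset E, (∀ x : E, ‖x‖ ≤ 1 → ∃ v ∈ N, ‖x - v‖ ≤ 1 / 2) → S ⊆ ⋃ v ∈ N, A v) :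
    μ S ≤ 5 ^ finrank ℝ E * p := by
  obtain ⟨N, hcard, hN1, hN⟩ := exists_finset_card_le_forall_norm_sub_le_half E
  calc μ S ≤ ∑ v ∈ N, μ (A v) := (measure_mono (hS N hN)).trans (measure_biUnion_finset_le _ _)
    _ ≤ ∑ _v ∈ N, p := Finset.sum_le_sum fun v hv => hA v (hN1 v hv)
    _ ≤ 5 ^ finrank ℝ E * p := by
        rw [Finset.sum_const, nsmul_eq_mul]
        gcongr
        exact_mod_cast hcard

theorem measure_two_mul_lt_norm_le [InnerProductSpace ℝ E] [FiniteDimensional ℝ E] {Z : Ω → E}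
    (h : ∀ v, ‖v‖ ≤ 1 → μ {ω | τ ≤ ⟪v, Z ω⟫} ≤ p) :
    μ {ω | 2 * τ < ‖Z ω‖} ≤ 5 ^ finrank ℝ E * p := by
  refine measure_le_five_pow_mul_of_forall_net h fun N hN ω hω => ?_
  contrapose! hω
  simp only [Set.mem_iUnion, Set.mem_ofPred_eq, not_exists, not_le, not_lt] at hω ⊢
  exact norm_le_of_forall_inner_le_of_net hN fun v hv => (hω v hv).le

theorem measure_two_mul_lt_opNorm_le [NormedSpace ℝ E] [FiniteDimensional ℝ E] [NormedSpace ℝ F]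
    {T : Ω → E →L[ℝ] F} (h : ∀ v, ‖v‖ ≤ 1 → μ {ω | τ < ‖T ω v‖} ≤ p) :
    μ {ω | 2 * τ < ‖T ω‖} ≤ 5 ^ finrank ℝ E * p := by
  refine measure_le_five_pow_mul_of_forall_net h fun N hN ω hω => ?_
  contrapose! hω
  simp only [Set.mem_iUnion, Set.mem_ofPred_eq, not_exists, not_lt] at hω ⊢
  exact opNorm_le_of_forall_norm_le_of_net hN hω

theorem measure_four_mul_lt_opNorm_le [InnerProductSpace ℝ E] [FiniteDimensional ℝ E]
    [InnerProductSpace ℝ F] [FiniteDimensional ℝ F] {T : Ω → E →L[ℝ] F}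
    (h : ∀ v u, ‖v‖ ≤ 1 → ‖u‖ ≤ 1 → μ {ω | τ ≤ ⟪u, T ω v⟫} ≤ p) :
    μ {ω | 4 * τ < ‖T ω‖} ≤ 5 ^ finrank ℝ E * (5 ^ finrank ℝ F * p) := by
  rw [show 4 * τ = 2 * (2 * τ) by ring]
  exact measure_two_mul_lt_opNorm_le fun v hv => measure_two_mul_lt_norm_le fun u hu => h v u hv hu

theorem five_pow_le_ofReal_exp (n : ℕ) : (5 : ENNReal) ^ n ≤ ENNReal.ofReal (Real.exp (2 * n)) := by
  have h5 : (5 : ℝ) ≤ Real.exp 2 := by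
    rw [show (2 : ℝ) = 1 + 1 by norm_num, Real.exp_add]
    nlinarith [Real.exp_one_gt_d9]
  rw [mul_comm, Real.exp_nat_mul, ENNReal.ofReal_pow (Real.exp_pos _).le]
  gcongr
  exact ENNReal.ofNat_le_ofReal.2 h5

end Net

section Chernoff

theorem measure_pi_le_sum_le {ι : Type*} [Fintype ι] {Ω : ι → Type*} [∀ i, MeasurableSpace (Ω i)]
    {μ : ∀ i, Measure (Ω i)} [∀ i, IsProbabilityMeasure (μ i)] {f : ∀ i, Ω i → ℝ}
    (hf : ∀ i, Measurable (f i)) {c : ι → ℝ}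
    (h : ∀ i, ∫⁻ x, ENNReal.ofReal (Real.exp (f i x)) ∂μ i ≤ ENNReal.ofReal (Real.exp (c i)))
    (a : ℝ) :
    Measure.pi μ {x | a ≤ ∑ i, f i (x i)} ≤ ENNReal.ofReal (Real.exp (∑ i, c i - a)) := by
  have hexp (g : ι → ℝ) :
      ENNReal.ofReal (Real.exp (∑ i, g i)) = ∏ i, ENNReal.ofReal (Real.exp (g i)) := by
    rw [Real.exp_sum, ENNReal.ofReal_prod_of_nonneg fun i _ => (Real.exp_pos _).le]
  have hmeas (i : ι) : Measurable fun x => ENNReal.ofReal (Real.exp (f i x)) := by fun_prop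
  have hmeas_sum : Measurable fun x : ∀ i, Ω i => ENNReal.ofReal (Real.exp (∑ i, f i (x i))) := by
    fun_prop
  have hmgf : ∫⁻ x, ENNReal.ofReal (Real.exp (∑ i, f i (x i))) ∂Measure.pi μ ≤
      ENNReal.ofReal (Real.exp (∑ i, c i)) := by
    simp_rw [hexp]
    rw [lintegral_prod_eq_prod_lintegral_of_indepFun _ _
      (iIndepFun_pi (X := fun i x => ENNReal.ofReal (Real.exp (f i x)))
        fun i => (hmeas i).aemeasurable) fun i => (hmeas i).comp (measurable_pi_apply i)]
    exact Finset.prod_le_prod' fun i _ =>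
      ((measurePreserving_eval μ i).lintegral_comp (hmeas i)).trans_le (h i)
  calc Measure.pi μ {x | a ≤ ∑ i, f i (x i)}
      ≤ Measure.pi μ {x | ENNReal.ofReal (Real.exp a) ≤
          ENNReal.ofReal (Real.exp (∑ i, f i (x i)))} :=
        measure_mono fun x hx => ENNReal.ofReal_le_ofReal (Real.exp_le_exp.2 hx)
    _ ≤ ENNReal.ofReal (Real.exp (∑ i, c i)) / ENNReal.ofReal (Real.exp a) :=
        (meas_ge_le_lintegral_div hmeas_sum.aemeasurable (by simp [Real.exp_pos])
          ENNReal.ofReal_ne_top).trans (by gcongr)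
    _ = ENNReal.ofReal (Real.exp (∑ i, c i - a)) := by
        rw [Real.exp_sub, ENNReal.ofReal_div_of_pos (Real.exp_pos _)]

/-- The centred function `f - ∫ f` is sub-exponential: on `|t| ≤ t₀` its moment generating function
is at most `exp (C * t ^ 2)`. The lower Lebesgue integral makes integrability of the exponential
part of the bound. -/
def HasSubExpMGF {Ω : Type*} [MeasurableSpace Ω] (f : Ω → ℝ) (C t₀ : ℝ) (μ : Measure Ω) : Prop :=
  ∀ t : ℝ, |t| ≤ t₀ → ∫⁻ x, ENNReal.ofReal (Real.exp (t * (f x - ∫ z, f z ∂μ))) ∂μ ≤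
    ENNReal.ofReal (Real.exp (C * t ^ 2))

namespace HasSubExpMGF

variable {Ω : Type*} [MeasurableSpace Ω] {μ : Measure Ω} {f : Ω → ℝ} {C t₀ : ℝ}

theorem neg (h : HasSubExpMGF f C t₀ μ) : HasSubExpMGF (fun x => -f x) C t₀ μ := fun t ht => by
  have hneg := h (-t) (by rwa [abs_neg])
  rw [neg_sq] at hneg
  refine le_of_eq_of_le (lintegral_congr fun x => ?_) hneg
  rw [integral_neg]
  ring_nf

variable [IsProbabilityMeasure μ] {ι : Type*} [Fintype ι]

theorem measure_pi_le_weighted_sum_le (h : HasSubExpMGF f C t₀ μ) (hf : Measurable f) {u : ι → ℝ}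
    (hu : ∀ i, |u i| ≤ t₀) (a : ℝ) :
    Measure.pi (fun _ : ι => μ) {x | a ≤ ∑ i, u i * (f (x i) - ∫ z, f z ∂μ)} ≤
      ENNReal.ofReal (Real.exp (C * ∑ i, u i ^ 2 - a)) := by
  rw [Finset.mul_sum]
  exact measure_pi_le_sum_le (f := fun i x => u i * (f x - ∫ z, f z ∂μ)) (by fun_prop)
    (fun i => h (u i) (hu i)) a

theorem measure_pi_le_average_sub_le (h : HasSubExpMGF f C t₀ μ) (hf : Measurable f) {t : ℝ}
    (ht : 0 ≤ t) (ht₀ : t ≤ t₀) (δ : ℝ) :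
    Measure.pi (fun _ : ι => μ) {x | δ ≤ (∑ i, f (x i)) / Fintype.card ι - ∫ z, f z ∂μ} ≤
      ENNReal.ofReal (Real.exp (Fintype.card ι * (C * t ^ 2 - t * δ))) := by
  have hsum := h.measure_pi_le_weighted_sum_le hf (u := fun _ : ι => t)
    (fun _ => by rwa [abs_of_nonneg ht]) (Fintype.card ι * (t * δ))
  rw [Finset.sum_const, Finset.card_univ, nsmul_eq_mul, mul_left_comm C, ← mul_sub] at hsum
  refine (measure_mono fun x hx => ?_).trans hsum
  simp only [Set.mem_ofPred_eq] at hx ⊢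
  rw [← Finset.mul_sum, Finset.sum_sub_distrib, Finset.sum_const, Finset.card_univ, nsmul_eq_mul]
  rcases isEmpty_or_nonempty ι with hι | hι
  · simp
  calc Fintype.card ι * (t * δ)
      ≤ Fintype.card ι * (t * ((∑ i, f (x i)) / Fintype.card ι - ∫ z, f z ∂μ)) := by gcongr
    _ = t * (∑ i, f (x i) - Fintype.card ι * ∫ z, f z ∂μ) := by field

theorem measure_pi_lt_abs_average_sub_le (h : HasSubExpMGF f C t₀ μ) (hf : Measurable f) {t : ℝ}
    (ht : 0 ≤ t) (ht₀ : t ≤ t₀) (δ : ℝ) :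
    Measure.pi (fun _ : ι => μ) {x | δ < |(∑ i, f (x i)) / Fintype.card ι - ∫ z, f z ∂μ|} ≤
      2 * ENNReal.ofReal (Real.exp (Fintype.card ι * (C * t ^ 2 - t * δ))) := by
  rw [two_mul]
  refine (measure_mono fun x hx => ?_).trans ((measure_union_le _ _).trans
    (add_le_add (h.measure_pi_le_average_sub_le hf ht ht₀ δ)
      (h.neg.measure_pi_le_average_sub_le hf.neg ht ht₀ δ)))
  simp only [Set.mem_union, Set.mem_ofPred_eq, Finset.sum_neg_distrib, integral_neg, neg_div,
    sub_neg_eq_add] at hx ⊢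
  exact (lt_abs.1 hx).imp le_of_lt fun hlt => by linarith

theorem measure_pi_le_unit_sum_le (h : ∀ t, HasSubExpMGF f C t μ) (hf : Measurable f)
    (hC : 0 ≤ C) {u : ι → ℝ} (hu : ∑ i, u i ^ 2 ≤ 1) (τ : ℝ) :
    Measure.pi (fun _ : ι => μ)
        {x | τ + |∫ z, f z ∂μ| ≤ ∑ i, u i * ((√(Fintype.card ι))⁻¹ * f (x i))} ≤
      ENNReal.ofReal (Real.exp (Fintype.card ι * (C - τ))) := by
  set d : ℝ := (Fintype.card ι : ℝ)
  set m := ∫ z, f z ∂μ with hm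
  have hd : 0 ≤ d := Nat.cast_nonneg _
  have hsq : √d * √d = d := Real.mul_self_sqrt hd
  have hsum : |∑ i, u i| ≤ √d := by
    refine Real.abs_le_sqrt ((sq_sum_le_card_mul_sum_sq (s := Finset.univ)).trans ?_)
    rw [Finset.card_univ]
    exact mul_le_of_le_one_right hd hu
  have hbound (i : ι) : |√d * u i| ≤ ∑ j, |√d * u j| :=
    Finset.single_le_sum (f := fun j => |√d * u j|) (fun j _ => abs_nonneg _) (Finset.mem_univ i)
  refine (measure_mono fun x hx => ?_).trans
    (((h _).measure_pi_le_weighted_sum_le hf hbound (d * τ)).trans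
      (ENNReal.ofReal_le_ofReal (Real.exp_le_exp.2 ?_)))
  · have hscale : d * ∑ i, u i * ((√d)⁻¹ * f (x i)) = ∑ i, √d * u i * f (x i) := by
      have hdiv : d * (√d)⁻¹ = √d := by rw [← div_eq_mul_inv, Real.div_sqrt]
      rw [Finset.mul_sum]
      exact Finset.sum_congr rfl fun i _ => by linear_combination u i * f (x i) * hdiv
    have hcentre : √d * (∑ i, u i) * m ≤ d * |m| :=
      calc √d * (∑ i, u i) * m ≤ |√d * (∑ i, u i) * m| := le_abs_self _
        _ = √d * |∑ i, u i| * |m| := by rw [abs_mul, abs_mul, abs_of_nonneg (Real.sqrt_nonneg d)]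
        _ ≤ √d * √d * |m| := by gcongr
        _ = d * |m| := by rw [hsq]
    have hx' : d * (τ + |m|) ≤ d * ∑ i, u i * ((√d)⁻¹ * f (x i)) := by gcongr; exact hx
    simp only [Set.mem_ofPred_eq, ← hm, mul_sub, Finset.sum_sub_distrib, ← Finset.sum_mul,
      ← Finset.mul_sum] at *
    linarith
  · simp only [mul_pow, ← Finset.mul_sum, sq (√d), hsq]
    nlinarith [mul_nonneg hd hC]

end HasSubExpMGF

end Chernoff

section Moments

variable {σ : ℝ → ℝ} {Λ : NNReal}

theorem integral_sq_stdGaussian : ∫ s, s ^ 2 ∂stdGaussian = 1 := by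
  rw [← variance_of_integral_eq_zero (X := fun s => s) aemeasurable_id' integral_id_gaussianReal,
    variance_fun_id_gaussianReal, NNReal.coe_one]

theorem integrable_sq_stdGaussian : Integrable (fun s : ℝ => s ^ 2) stdGaussian :=
  (memLp_id_gaussianReal' 2 (by simp)).integrable_sq

theorem integrable_abs_stdGaussian : Integrable (fun s : ℝ => |s|) stdGaussian :=
  ((memLp_id_gaussianReal' 2 (by simp)).integrable (by norm_num)).abs

theorem integral_abs_stdGaussian_le_one : ∫ s, |s| ∂stdGaussian ≤ 1 := by
  calc ∫ s, |s| ∂stdGaussian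
    _ ≤ ∫ s, (1 + s ^ 2) / 2 ∂stdGaussian := by
        refine integral_mono integrable_abs_stdGaussian
          (((integrable_const _).add integrable_sq_stdGaussian).div_const _) fun s => ?_
        change |s| ≤ (1 + s ^ 2) / 2
        nlinarith [sq_nonneg (|s| - 1), sq_abs s]
    _ = 1 := by
        rw [integral_div, integral_add (integrable_const _) integrable_sq_stdGaussian,
          integral_sq_stdGaussian]
        simp

theorem abs_sqrt_sub_one_le {a : ℝ} (ha : 0 ≤ a) : |√a - 1| ≤ |a - 1| := by
  have hfactor : a - 1 = (√a - 1) * (√a + 1) := by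
    linear_combination -Real.sq_sqrt ha
  rw [hfactor, abs_mul]
  refine le_mul_of_one_le_right (abs_nonneg _) ((le_abs_self _).trans' ?_)
  linarith [Real.sqrt_nonneg a]

theorem abs_integral_sub_integral_le {Ω : Type*} [MeasurableSpace Ω] {μ : Measure Ω}
    {f g h : Ω → ℝ} (hf : Integrable f μ) (hg : Integrable g μ) (hh : Integrable h μ)
    (hle : ∀ ω, |f ω - g ω| ≤ h ω) : |∫ ω, f ω ∂μ - ∫ ω, g ω ∂μ| ≤ ∫ ω, h ω ∂μ := by
  rw [← integral_sub hf hg, ← Real.norm_eq_abs]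
  exact norm_integral_le_of_norm_le hh (ae_of_all _ hle)

theorem memLp_comp_of_lipschitzWith {Ω : Type*} [MeasurableSpace Ω] {μ : Measure Ω}
    [IsFiniteMeasure μ] {f : Ω → ℝ} {p : ENNReal} (hσ : LipschitzWith Λ σ) (hf : MemLp f p μ) :
    MemLp (fun ω => σ (f ω)) p μ := by
  have hcenter : LipschitzWith Λ fun s => σ s - σ 0 := by simpa using hσ.sub (.const (σ 0))
  convert (hcenter.comp_memLp (sub_self _) hf).add (memLp_const (σ 0)) using 1
  ext ω
  simp

theorem abs_comp_sub_comp_le (hσ : LipschitzWith Λ σ) (s t : ℝ) : |σ s - σ t| ≤ Λ * |s - t| := by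
  simpa [Real.dist_eq] using hσ.dist_le_mul s t

theorem memLp_comp_mul_stdGaussian (hσ : LipschitzWith Λ σ) (r : ℝ) :
    MemLp (fun s => σ (r * s)) 2 stdGaussian :=
  memLp_comp_of_lipschitzWith hσ ((memLp_id_gaussianReal' 2 (by simp)).const_mul r)

theorem memLp_comp_stdGaussian (hσ : LipschitzWith Λ σ) : MemLp σ 2 stdGaussian := by
  simpa using memLp_comp_mul_stdGaussian hσ 1

theorem abs_comp_mul_sub_comp_le (hσ : LipschitzWith Λ σ) (r s : ℝ) :
    |σ (r * s) - σ s| ≤ Λ * |r - 1| * |s| := by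
  rw [mul_assoc, ← abs_mul, sub_one_mul]
  exact abs_comp_sub_comp_le hσ _ _

theorem abs_integral_comp_mul_sub_le (hσ : LipschitzWith Λ σ) (r : ℝ) :
    |∫ s, σ (r * s) ∂stdGaussian - ∫ s, σ s ∂stdGaussian| ≤ Λ * |r - 1| := by
  calc |∫ s, σ (r * s) ∂stdGaussian - ∫ s, σ s ∂stdGaussian|
    _ ≤ ∫ s, Λ * |r - 1| * |s| ∂stdGaussian :=
        abs_integral_sub_integral_le ((memLp_comp_mul_stdGaussian hσ r).integrable (by norm_num))
          ((memLp_comp_stdGaussian hσ).integrable (by norm_num))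
          (integrable_abs_stdGaussian.const_mul _) (abs_comp_mul_sub_comp_le hσ r)
    _ = Λ * |r - 1| * ∫ s, |s| ∂stdGaussian := integral_const_mul _ _
    _ ≤ Λ * |r - 1| := mul_le_of_le_one_right (by positivity) integral_abs_stdGaussian_le_one

theorem abs_sq_comp_mul_sub_sq_comp_le (hσ : LipschitzWith Λ σ) (r s : ℝ) :
    |σ (r * s) ^ 2 - σ s ^ 2| ≤
      (Λ * |r - 1|) ^ 2 * s ^ 2 + Λ * |r - 1| * (s ^ 2 + σ s ^ 2) := by
  set D := σ (r * s) - σ s with hD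
  have hDle : |D| ≤ Λ * |r - 1| * |s| := abs_comp_mul_sub_comp_le hσ r s
  have hDsq : D ^ 2 ≤ (Λ * |r - 1|) ^ 2 * s ^ 2 := by
    rw [← sq_abs D, ← sq_abs s, ← mul_pow]
    gcongr
  have hamgm : 2 * (|s| * |σ s|) ≤ s ^ 2 + σ s ^ 2 := by
    nlinarith [two_mul_le_add_sq |s| |σ s|, sq_abs s, sq_abs (σ s)]
  calc |σ (r * s) ^ 2 - σ s ^ 2|
    _ = |D ^ 2 + 2 * (D * σ s)| := by rw [hD]; ring_nf
    _ ≤ D ^ 2 + 2 * (|D| * |σ s|) := by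
        refine (abs_add_le _ _).trans_eq ?_
        rw [abs_of_nonneg (sq_nonneg D), abs_mul, abs_mul, abs_of_pos two_pos]
    _ ≤ (Λ * |r - 1|) ^ 2 * s ^ 2 + 2 * (Λ * |r - 1| * |s| * |σ s|) := by gcongr
    _ = (Λ * |r - 1|) ^ 2 * s ^ 2 + Λ * |r - 1| * (2 * (|s| * |σ s|)) := by ring
    _ ≤ _ := by gcongr

theorem abs_integral_sq_comp_mul_sub_le (hσ : LipschitzWith Λ σ) (r : ℝ) :
    |∫ s, σ (r * s) ^ 2 ∂stdGaussian - ∫ s, σ s ^ 2 ∂stdGaussian| ≤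
      (Λ * |r - 1|) ^ 2 + Λ * |r - 1| * (1 + ∫ s, σ s ^ 2 ∂stdGaussian) := by
  have hσ2 := (memLp_comp_stdGaussian hσ).integrable_sq
  have hs2 := integrable_sq_stdGaussian
  have hsum : Integrable (fun s => s ^ 2 + σ s ^ 2) stdGaussian := hs2.add hσ2
  refine (abs_integral_sub_integral_le (memLp_comp_mul_stdGaussian hσ r).integrable_sq hσ2
    ((hs2.const_mul _).add (hsum.const_mul _))
    (abs_sq_comp_mul_sub_sq_comp_le hσ r)).trans_eq ?_
  rw [integral_add' (hs2.const_mul _) (hsum.const_mul _), integral_const_mul,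
    integral_const_mul, integral_add hs2 hσ2, integral_sq_stdGaussian, mul_one]

variable {d : ℕ} {x y : Fin d → ℝ} {ε : ℝ}

theorem memLp_dotProduct_gaussianVec (x : Fin d → ℝ) :
    MemLp (fun w => w ⬝ᵥ x) 2 (gaussianVec d) :=
  (hasGaussianLaw_dotProduct x).memLp_two

theorem memLp_comp_dotProduct_gaussianVec (hσ : LipschitzWith Λ σ) (x : Fin d → ℝ) :
    MemLp (fun w => σ (w ⬝ᵥ x)) 2 (gaussianVec d) :=
  memLp_comp_of_lipschitzWith hσ (memLp_dotProduct_gaussianVec x)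

theorem integral_sq_dotProduct_gaussianVec (x : Fin d → ℝ) :
    ∫ w, (w ⬝ᵥ x) ^ 2 ∂gaussianVec d = x ⬝ᵥ x := by
  rw [← variance_of_integral_eq_zero (X := fun w => w ⬝ᵥ x) (by fun_prop)
    (integral_dotProduct_gaussianVec x), variance_dotProduct_gaussianVec]

theorem abs_integral_comp_dotProduct_le (hσ : LipschitzWith Λ σ)
    (hmean : ∫ s, σ s ∂stdGaussian = 0) (x : Fin d → ℝ) :
    |∫ w, σ (w ⬝ᵥ x) ∂gaussianVec d| ≤ Λ * |x ⬝ᵥ x - 1| := by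
  rw [integral_comp_dotProduct_gaussianVec x hσ.continuous.measurable]
  calc _ ≤ Λ * |√(x ⬝ᵥ x) - 1| := by
        simpa [hmean] using abs_integral_comp_mul_sub_le hσ √(x ⬝ᵥ x)
    _ ≤ Λ * |x ⬝ᵥ x - 1| := by
        gcongr ?_ * ?_
        exact abs_sqrt_sub_one_le (dotProduct_self_nonneg x)

theorem abs_integral_sq_comp_dotProduct_sub_one_le (hσ : LipschitzWith Λ σ)
    (hvar : ∫ s, σ s ^ 2 ∂stdGaussian = 1) (hx : |x ⬝ᵥ x - 1| ≤ 1) :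
    |∫ w, σ (w ⬝ᵥ x) ^ 2 ∂gaussianVec d - 1| ≤ Λ * (Λ + 2) * |x ⬝ᵥ x - 1| := by
  rw [integral_comp_dotProduct_gaussianVec x (hσ.continuous.measurable.pow_const 2)]
  have hr := abs_sqrt_sub_one_le (dotProduct_self_nonneg x)
  set δ := |√(x ⬝ᵥ x) - 1|
  calc _ ≤ (Λ * δ) ^ 2 + Λ * δ * (1 + 1) := by
        simpa [hvar] using abs_integral_sq_comp_mul_sub_le hσ √(x ⬝ᵥ x)
    _ = Λ * (Λ * δ + 2) * δ := by ring
    _ ≤ Λ * (Λ * 1 + 2) * |x ⬝ᵥ x - 1| := by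
        gcongr
        exact hr.trans hx
    _ = _ := by rw [mul_one]

theorem dotProduct_self_sub_smul (h : x ⬝ᵥ x ≠ 0) :
    (y - (x ⬝ᵥ y / x ⬝ᵥ x) • x) ⬝ᵥ (y - (x ⬝ᵥ y / x ⬝ᵥ x) • x) =
      y ⬝ᵥ y - (x ⬝ᵥ y) ^ 2 / x ⬝ᵥ x := by
  simp only [sub_dotProduct, dotProduct_sub, smul_dotProduct, dotProduct_smul, smul_eq_mul,
    dotProduct_comm y x]
  field

theorem abs_integral_comp_mul_comp_sub_le (hσ : LipschitzWith Λ σ) (x y : Fin d → ℝ) (c : ℝ) :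
    |∫ w, σ (w ⬝ᵥ x) * σ (w ⬝ᵥ y) ∂gaussianVec d -
        ∫ w, σ (w ⬝ᵥ x) * σ (w ⬝ᵥ (y - c • x)) ∂gaussianVec d| ≤
      Λ * |c| / 2 * (∫ w, σ (w ⬝ᵥ x) ^ 2 ∂gaussianVec d + x ⬝ᵥ x) := by
  have hx := memLp_comp_dotProduct_gaussianVec hσ x
  have hlin := memLp_dotProduct_gaussianVec x
  have hint := (hx.integrable_sq.add hlin.integrable_sq).const_mul (Λ * |c| / 2)
  refine (abs_integral_sub_integral_le
    (hx.integrable_mul (memLp_comp_dotProduct_gaussianVec hσ y))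
    (hx.integrable_mul (memLp_comp_dotProduct_gaussianVec hσ (y - c • x)))
    hint fun w => ?_).trans_eq ?_
  · have hincr : |σ (w ⬝ᵥ y) - σ (w ⬝ᵥ (y - c • x))| ≤ Λ * (|c| * |w ⬝ᵥ x|) := by
      refine (abs_comp_sub_comp_le hσ _ _).trans_eq ?_
      rw [← dotProduct_sub, sub_sub_cancel, dotProduct_smul, smul_eq_mul, abs_mul]
    have hamgm : |σ (w ⬝ᵥ x)| * |w ⬝ᵥ x| ≤ (σ (w ⬝ᵥ x) ^ 2 + (w ⬝ᵥ x) ^ 2) / 2 := by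
      nlinarith [two_mul_le_add_sq |σ (w ⬝ᵥ x)| |w ⬝ᵥ x|, sq_abs (σ (w ⬝ᵥ x)), sq_abs (w ⬝ᵥ x)]
    calc |σ (w ⬝ᵥ x) * σ (w ⬝ᵥ y) - σ (w ⬝ᵥ x) * σ (w ⬝ᵥ (y - c • x))|
      _ ≤ |σ (w ⬝ᵥ x)| * (Λ * (|c| * |w ⬝ᵥ x|)) := by
          rw [← mul_sub, abs_mul]
          gcongr
      _ = Λ * |c| * (|σ (w ⬝ᵥ x)| * |w ⬝ᵥ x|) := by ring
      _ ≤ Λ * |c| * ((σ (w ⬝ᵥ x) ^ 2 + (w ⬝ᵥ x) ^ 2) / 2) := by gcongr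
      _ = Λ * |c| / 2 * (σ (w ⬝ᵥ x) ^ 2 + (w ⬝ᵥ x) ^ 2) := by ring
  · rw [integral_const_mul]
    simp only [Pi.add_apply]
    rw [integral_add hx.integrable_sq hlin.integrable_sq, integral_sq_dotProduct_gaussianVec]

theorem integral_comp_mul_comp_of_dotProduct_eq_zero (hσ : LipschitzWith Λ σ) (h : x ⬝ᵥ y = 0) :
    ∫ w, σ (w ⬝ᵥ x) * σ (w ⬝ᵥ y) ∂gaussianVec d =
      (∫ w, σ (w ⬝ᵥ x) ∂gaussianVec d) * ∫ w, σ (w ⬝ᵥ y) ∂gaussianVec d :=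
  ((indepFun_dotProduct_gaussianVec h).comp hσ.continuous.measurable
    hσ.continuous.measurable).integral_fun_mul_eq_mul_integral
      (memLp_comp_dotProduct_gaussianVec hσ x).aestronglyMeasurable
      (memLp_comp_dotProduct_gaussianVec hσ y).aestronglyMeasurable

theorem abs_integral_comp_mul_comp_le_of_orthogonal (hσ : LipschitzWith Λ σ) {c : ℝ}
    (h : x ⬝ᵥ (y - c • x) = 0) :
    |∫ w, σ (w ⬝ᵥ x) * σ (w ⬝ᵥ y) ∂gaussianVec d| ≤
      |∫ w, σ (w ⬝ᵥ x) ∂gaussianVec d| * |∫ w, σ (w ⬝ᵥ (y - c • x)) ∂gaussianVec d| +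
        Λ * |c| / 2 * (∫ w, σ (w ⬝ᵥ x) ^ 2 ∂gaussianVec d + x ⬝ᵥ x) := by
  have hreplace := abs_integral_comp_mul_comp_sub_le hσ x y c
  rw [integral_comp_mul_comp_of_dotProduct_eq_zero hσ h] at hreplace
  rw [← abs_mul, ← sub_le_iff_le_add']
  exact (abs_sub_abs_le_abs_sub _ _).trans hreplace

theorem integral_sq_comp_dotProduct_le (hσ : LipschitzWith Λ σ)
    (hvar : ∫ s, σ s ^ 2 ∂stdGaussian = 1) (hx : |x ⬝ᵥ x - 1| ≤ 1 / 2) :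
    ∫ w, σ (w ⬝ᵥ x) ^ 2 ∂gaussianVec d ≤ 1 + Λ * (Λ + 2) * (1 / 2) := by
  have hle := (abs_integral_sq_comp_dotProduct_sub_one_le hσ hvar
    (hx.trans (by norm_num))).trans (mul_le_mul_of_nonneg_left hx (by positivity))
  linarith [le_of_abs_le hle]

theorem abs_integral_comp_mul_comp_le (hσ : LipschitzWith Λ σ)
    (hmean : ∫ s, σ s ∂stdGaussian = 0) (hvar : ∫ s, σ s ^ 2 ∂stdGaussian = 1) (hε : ε ≤ 1 / 2)
    (hx : |x ⬝ᵥ x - 1| ≤ ε) (hy : |y ⬝ᵥ y - 1| ≤ ε) (hxy : |x ⬝ᵥ y| ≤ ε) :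
    |∫ w, σ (w ⬝ᵥ x) * σ (w ⬝ᵥ y) ∂gaussianVec d| ≤ Λ * (Λ + 2) ^ 2 * ε := by
  obtain ⟨hxl, hxu⟩ := abs_le.1 hx
  obtain ⟨-, hyu⟩ := abs_le.1 hy
  have hε0 : 0 ≤ ε := (abs_nonneg _).trans hx
  have hxpos : 0 < x ⬝ᵥ x := by linarith
  set c := x ⬝ᵥ y / x ⬝ᵥ x with hc_def
  set z := y - c • x with hz_def
  have hc : |c| ≤ 2 * ε := by
    rw [hc_def, abs_div, abs_of_pos hxpos, div_le_iff₀ hxpos]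
    nlinarith
  have hxz : x ⬝ᵥ z = 0 := by
    rw [hz_def, dotProduct_sub, dotProduct_smul, smul_eq_mul, hc_def,
      div_mul_cancel₀ _ hxpos.ne', sub_self]
  have hzz : |z ⬝ᵥ z - 1| ≤ 1 := by
    have hnonneg : 0 ≤ z ⬝ᵥ z := dotProduct_self_nonneg z
    have hle : z ⬝ᵥ z ≤ y ⬝ᵥ y :=
      (dotProduct_self_sub_smul hxpos.ne').trans_le (sub_le_self _ (by positivity))
    exact abs_le.2 ⟨by linarith, by linarith⟩
  calc |∫ w, σ (w ⬝ᵥ x) * σ (w ⬝ᵥ y) ∂gaussianVec d|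
    _ ≤ _ := abs_integral_comp_mul_comp_le_of_orthogonal hσ hxz
    _ ≤ Λ * ε * (Λ * 1) + Λ * (2 * ε) / 2 * (1 + Λ * (Λ + 2) * (1 / 2) + (1 + 1 / 2)) := by
        gcongr ?_ * ?_ + ?_ / 2 * (?_ + ?_)
        · exact (abs_integral_comp_dotProduct_le hσ hmean x).trans (by gcongr)
        · exact (abs_integral_comp_dotProduct_le hσ hmean z).trans (by gcongr)
        · gcongr
        · exact integral_sq_comp_dotProduct_le hσ hvar (hx.trans hε)
        · linarith
    _ = Λ * (Λ ^ 2 / 2 + 2 * Λ + 5 / 2) * ε := by ring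
    _ ≤ Λ * (Λ + 2) ^ 2 * ε := by
        gcongr
        nlinarith

end Moments

section ExpMoments

theorem integrable_exp_sq_div_four_stdGaussian :
    Integrable (fun s : ℝ => Real.exp (s ^ 2 / 4)) stdGaussian := by
  rw [_root_.stdGaussian, gaussianReal_of_var_ne_zero 0 one_ne_zero, integrable_withDensity_iff
    (measurable_gaussianPDF 0 1) (ae_of_all _ fun _ => gaussianPDF_lt_top)]
  refine ((integrable_exp_neg_mul_sq (b := 1 / 4) (by norm_num)).const_mul
    (√(2 * Real.pi * 1))⁻¹).congr (ae_of_all _ fun s => ?_)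
  simp only [toReal_gaussianPDF, gaussianPDFReal, sub_zero, NNReal.coe_one]
  rw [mul_left_comm, ← Real.exp_add]
  ring_nf

theorem sq_comp_le_of_lipschitzWith {σ : ℝ → ℝ} {Λ : NNReal} (hσ : LipschitzWith Λ σ) (s : ℝ) :
    σ s ^ 2 ≤ 2 * σ 0 ^ 2 + 2 * Λ ^ 2 * s ^ 2 := by
  have hincr : (σ s - σ 0) ^ 2 ≤ Λ ^ 2 * s ^ 2 := by
    have h := pow_le_pow_left₀ (abs_nonneg _) (abs_comp_sub_comp_le hσ s 0) 2
    rwa [sub_zero, mul_pow, sq_abs, sq_abs] at h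
  nlinarith [sq_nonneg (σ s - 2 * σ 0)]

theorem exists_lintegral_exp_sq_comp_dotProduct_le {σ : ℝ → ℝ} {Λ : NNReal}
    (hσ : LipschitzWith Λ σ) :
    ∃ κ > 0, ∃ K ≥ 0, ∀ (d : ℕ) (x : Fin d → ℝ), x ⬝ᵥ x ≤ 2 →
      ∫⁻ w, ENNReal.ofReal (Real.exp (κ * σ (w ⬝ᵥ x) ^ 2)) ∂gaussianVec d ≤
        ENNReal.ofReal K := by
  set κ : ℝ := 1 / (16 * (Λ ^ 2 + 1)) with hκ_def
  have hκΛ : κ * Λ ^ 2 ≤ 1 / 16 := by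
    rw [hκ_def, div_mul_eq_mul_div, div_le_div_iff₀ (by positivity) (by norm_num)]
    linarith
  refine ⟨κ, by positivity, ∫ s, Real.exp (2 * κ * σ 0 ^ 2) * Real.exp (s ^ 2 / 4) ∂stdGaussian,
    integral_nonneg fun s => by positivity, fun d x hx => ?_⟩
  have hσm : Measurable σ := hσ.continuous.measurable
  rw [lintegral_comp_dotProduct_gaussianVec x
      (f := fun s => ENNReal.ofReal (Real.exp (κ * σ s ^ 2))) (by fun_prop),
    ofReal_integral_eq_lintegral_ofReal (integrable_exp_sq_div_four_stdGaussian.const_mul _)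
      (ae_of_all _ fun s => by positivity)]
  refine lintegral_mono fun s => ENNReal.ofReal_le_ofReal ?_
  rw [← Real.exp_add, Real.exp_le_exp]
  calc κ * σ (√(x ⬝ᵥ x) * s) ^ 2
    _ ≤ κ * (2 * σ 0 ^ 2 + 2 * Λ ^ 2 * (√(x ⬝ᵥ x) * s) ^ 2) := by
        gcongr
        exact sq_comp_le_of_lipschitzWith hσ _
    _ = 2 * κ * σ 0 ^ 2 + 2 * (κ * Λ ^ 2) * (x ⬝ᵥ x * s ^ 2) := by
        rw [mul_pow, Real.sq_sqrt (dotProduct_self_nonneg x)]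
        ring
    _ ≤ 2 * κ * σ 0 ^ 2 + 2 * (1 / 16) * (2 * s ^ 2) := by
        gcongr
        exact mul_nonneg (dotProduct_self_nonneg x) (sq_nonneg s)
    _ = 2 * κ * σ 0 ^ 2 + s ^ 2 / 4 := by ring

theorem exp_sum_le_of_sum_le_one {ι : Type*} [Fintype ι] {w : ι → ℝ} (hw : ∀ i, 0 ≤ w i)
    (hw1 : ∑ i, w i ≤ 1) (a : ι → ℝ) :
    Real.exp (∑ i, w i * a i) ≤ (1 - ∑ i, w i) + ∑ i, w i * Real.exp (a i) := by
  have hjensen := convexOn_exp.map_sum_le (t := (Finset.univ : Finset (Option ι)))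
    (w := fun o => o.elim (1 - ∑ i, w i) w) (p := fun o => o.elim 0 a)
    (by rintro (_ | i) _ <;> simp [hw, hw1]) (by simp [Fintype.sum_option]) (by simp)
  simpa [Fintype.sum_option] using hjensen

theorem lintegral_exp_sum_le_of_sum_le_one {Ω ι : Type*} [MeasurableSpace Ω] {μ : Measure Ω}
    [IsProbabilityMeasure μ] [Fintype ι] {w : ι → ℝ} {K : ℝ} (hw : ∀ i, 0 ≤ w i)
    (hw1 : ∑ i, w i ≤ 1) {g : ι → Ω → ℝ} (hg : ∀ i, Measurable (g i)) (hK : 0 ≤ K)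
    (hexp : ∀ i, ∫⁻ ω, ENNReal.ofReal (Real.exp (g i ω)) ∂μ ≤ ENNReal.ofReal K) :
    ∫⁻ ω, ENNReal.ofReal (Real.exp (∑ i, w i * g i ω)) ∂μ ≤
      ENNReal.ofReal (Real.exp ((∑ i, w i) * K)) := by
  have hw0 : 0 ≤ ∑ i, w i := Finset.sum_nonneg fun i _ => hw i
  calc ∫⁻ ω, ENNReal.ofReal (Real.exp (∑ i, w i * g i ω)) ∂μ
    _ ≤ ∫⁻ ω, (ENNReal.ofReal (1 - ∑ i, w i) +
          ∑ i, ENNReal.ofReal (w i) * ENNReal.ofReal (Real.exp (g i ω))) ∂μ := by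
        refine lintegral_mono fun ω => (ENNReal.ofReal_le_ofReal
          (exp_sum_le_of_sum_le_one hw hw1 fun i => g i ω)).trans_eq ?_
        have hterm : ∀ i, 0 ≤ w i * Real.exp (g i ω) := fun i => mul_nonneg (hw i) (by positivity)
        rw [ENNReal.ofReal_add (by linarith) (Finset.sum_nonneg fun i _ => hterm i),
          ENNReal.ofReal_sum_of_nonneg fun i _ => hterm i]
        simp_rw [ENNReal.ofReal_mul (hw _)]
    _ = ENNReal.ofReal (1 - ∑ i, w i) +
          ∑ i, ENNReal.ofReal (w i) * ∫⁻ ω, ENNReal.ofReal (Real.exp (g i ω)) ∂μ := by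
        rw [lintegral_add_left measurable_const, lintegral_finsetSum _ fun i _ => by fun_prop]
        simp only [lintegral_const, measure_univ, mul_one]
        congr! 2 with i
        exact lintegral_const_mul _ (by fun_prop)
    _ ≤ ENNReal.ofReal (1 - ∑ i, w i) + ∑ i, ENNReal.ofReal (w i) * ENNReal.ofReal K := by
        gcongr with i
        exact hexp i
    _ = ENNReal.ofReal ((1 - ∑ i, w i) + (∑ i, w i) * K) := by
        rw [ENNReal.ofReal_add (by linarith) (mul_nonneg hw0 hK), ENNReal.ofReal_mul hw0,
          ENNReal.ofReal_sum_of_nonneg fun i _ => hw i, Finset.sum_mul]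
    _ ≤ ENNReal.ofReal (Real.exp ((∑ i, w i) * K)) := by
        refine ENNReal.ofReal_le_ofReal ?_
        linarith [Real.add_one_le_exp ((∑ i, w i) * K)]

end ExpMoments

section GaussianConcentration

theorem memLp_comp_eval_of_isGaussian {ι : Type*} {ν : Measure (ι → ℝ)} [IsGaussian ν]
    {σ : ℝ → ℝ} {Λ : NNReal} (hΛ : LipschitzWith Λ σ) (i : ι) :
    MemLp (fun u : ι → ℝ => σ (u i)) 2 ν :=
  memLp_comp_of_lipschitzWith hΛ (IsGaussian.hasGaussianLaw_id.eval i).memLp_two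

variable {ι : Type*} [Fintype ι]

/-- The linear form `u ↦ u ⬝ᵥ p`, in which the derivative of a function with gradient `p` is
expressed. -/
noncomputable def dotProductCLM (p : ι → ℝ) : StrongDual ℝ (ι → ℝ) :=
  ∑ i, p i • ContinuousLinearMap.proj i

@[simp]
theorem dotProductCLM_apply (p u : ι → ℝ) : dotProductCLM p u = u ⬝ᵥ p := by
  simp [dotProductCLM, dotProduct, mul_comm]

variable {ν : Measure (ι → ℝ)} [IsGaussian ν] {b : ℝ} {F : (ι → ℝ) → ℝ}
  {p : (ι → ℝ) → ι → ℝ}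

theorem lintegral_exp_sub_integral_le_of_gradient (hν : ν[id] = 0)
    (hcov : ∀ p, Var[fun u => u ⬝ᵥ p; ν] ≤ b * (p ⬝ᵥ p))
    (hF : ∀ u, HasFDerivAt F (dotProductCLM (p u)) u) (hp : Continuous p)
    (hint : Integrable F ν) (t : ℝ) :
    ∫⁻ u, ENNReal.ofReal (Real.exp (t * (F u - ∫ z, F z ∂ν))) ∂ν ≤
      ∫⁻ u, ENNReal.ofReal (Real.exp (t ^ 2 * (Real.pi ^ 2 / 8 * b * (p u ⬝ᵥ p u)))) ∂ν := by
  have hcont : Continuous fun u => dotProductCLM (p u) := by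
    simp only [dotProductCLM]
    fun_prop
  refine (lintegral_exp_sub_integral_le_of_isGaussian hν hF hcont hint t).trans
    (lintegral_mono fun u => ?_)
  have hvar : Var[dotProductCLM (p u); ν] ≤ b * (p u ⬝ᵥ p u) := by
    simpa only [funext (dotProductCLM_apply (p u))] using hcov (p u)
  rw [mul_assoc (t ^ 2), mul_assoc _ b]
  gcongr

theorem hasSubExpMGF_of_gradient_le (hν : ν[id] = 0)
    (hcov : ∀ p, Var[fun u => u ⬝ᵥ p; ν] ≤ b * (p ⬝ᵥ p)) (hb : 0 ≤ b)
    (hF : ∀ u, HasFDerivAt F (dotProductCLM (p u)) u) (hp : Continuous p)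
    (hint : Integrable F ν) {a : ℝ} (ha : ∀ u, p u ⬝ᵥ p u ≤ a) (t₀ : ℝ) :
    HasSubExpMGF F (Real.pi ^ 2 / 8 * b * a) t₀ ν := by
  intro t _
  calc _ ≤ _ := lintegral_exp_sub_integral_le_of_gradient hν hcov hF hp hint t
    _ ≤ ∫⁻ _, ENNReal.ofReal (Real.exp (Real.pi ^ 2 / 8 * b * a * t ^ 2)) ∂ν := by
        refine lintegral_mono fun u => ENNReal.ofReal_le_ofReal (Real.exp_le_exp.2 ?_)
        rw [mul_comm (t ^ 2)]
        gcongr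
        exact ha u
    _ = _ := by simp

theorem hasSubExpMGF_of_gradient_le_weighted_sum (hν : ν[id] = 0)
    (hcov : ∀ p, Var[fun u => u ⬝ᵥ p; ν] ≤ b * (p ⬝ᵥ p)) (hb : 0 ≤ b)
    (hF : ∀ u, HasFDerivAt F (dotProductCLM (p u)) u) (hp : Continuous p)
    (hint : Integrable F ν) {a κ K t₀ : ℝ} {q : ι → ℝ} {g : ℝ → ℝ} (ha : 0 ≤ a)
    (hq : ∀ i, 0 ≤ q i) (hq1 : ∑ i, q i ≤ 1) (hpq : ∀ u, p u ⬝ᵥ p u ≤ a * ∑ i, q i * g (u i))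
    (hg : Measurable g) (hκ : 0 < κ) (hK : 0 ≤ K)
    (hexp : ∀ i, ∫⁻ u, ENNReal.ofReal (Real.exp (κ * g (u i))) ∂ν ≤ ENNReal.ofReal K)
    (ht₀ : Real.pi ^ 2 / 8 * b * a * t₀ ^ 2 ≤ κ) :
    HasSubExpMGF F (Real.pi ^ 2 / 8 * b * a * K / κ) t₀ ν := by
  intro t ht
  set c := Real.pi ^ 2 / 8 * b * a with hc_def
  have hsum : ∑ i, t ^ 2 * c * q i / κ ≤ c * t ^ 2 / κ := by
    rw [← Finset.sum_div, ← Finset.mul_sum, mul_comm c]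
    gcongr ?_ / κ
    exact mul_le_of_le_one_right (by positivity) hq1
  have hsum_le_one : ∑ i, t ^ 2 * c * q i / κ ≤ 1 := by
    refine hsum.trans ((div_le_one hκ).2 (ht₀.trans' ?_))
    gcongr c * ?_
    exact sq_le_sq.2 (ht.trans (le_abs_self t₀))
  calc _ ≤ _ := lintegral_exp_sub_integral_le_of_gradient hν hcov hF hp hint t
    _ ≤ ∫⁻ u, ENNReal.ofReal (Real.exp (∑ i, t ^ 2 * c * q i / κ * (κ * g (u i)))) ∂ν := by
        refine lintegral_mono fun u => ENNReal.ofReal_le_ofReal (Real.exp_le_exp.2 ?_)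
        calc t ^ 2 * (Real.pi ^ 2 / 8 * b * (p u ⬝ᵥ p u))
          _ ≤ t ^ 2 * (Real.pi ^ 2 / 8 * b * (a * ∑ i, q i * g (u i))) := by
              gcongr
              exact hpq u
          _ = _ := by
              rw [← mul_assoc _ a, ← hc_def, ← mul_assoc, Finset.mul_sum]
              exact Finset.sum_congr rfl fun i _ => by field
    _ ≤ _ := lintegral_exp_sum_le_of_sum_le_one (fun i => by have := hq i; positivity)
        hsum_le_one (fun i => by fun_prop) hK hexp
    _ ≤ _ := by
        refine ENNReal.ofReal_le_ofReal (Real.exp_le_exp.2 ?_)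
        calc (∑ i, t ^ 2 * c * q i / κ) * K ≤ c * t ^ 2 / κ * K := by gcongr
          _ = c * K / κ * t ^ 2 := by ring

variable {σ : ℝ → ℝ} {Λ : NNReal} {κ K t₀ : ℝ} {v : ι → ℝ}

theorem hasFDerivAt_sum_mul_comp {φ : ℝ → ℝ} (hφ : Differentiable ℝ φ) (v u : ι → ℝ) :
    HasFDerivAt (fun u => ∑ i, v i * φ (u i)) (dotProductCLM fun i => v i * deriv φ (u i)) u := by
  refine (HasFDerivAt.fun_sum fun i _ => ((hφ (u i)).hasDerivAt.comp_hasFDerivAt u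
    (ContinuousLinearMap.proj (R := ℝ) (φ := fun _ : ι => ℝ) i).hasFDerivAt).const_mul
      (v i)).congr_fderiv ?_
  simp only [dotProductCLM, mul_smul]

theorem sq_deriv_le_of_lipschitzWith (hΛ : LipschitzWith Λ σ) (s : ℝ) :
    deriv σ s ^ 2 ≤ (Λ : ℝ) ^ 2 :=
  sq_le_sq.2 (by simpa using norm_deriv_le_of_lipschitz hΛ (x₀ := s))

theorem hasSubExpMGF_sum_mul_comp (hσ : ContDiff ℝ 1 σ) (hΛ : LipschitzWith Λ σ)
    (hν : ν[id] = 0) (hcov : ∀ p, Var[fun u => u ⬝ᵥ p; ν] ≤ b * (p ⬝ᵥ p)) (hb : 0 ≤ b)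
    (hv : ∑ i, v i ^ 2 ≤ 1) (t₀ : ℝ) :
    HasSubExpMGF (fun u => ∑ i, v i * σ (u i)) (Real.pi ^ 2 / 8 * b * Λ ^ 2) t₀ ν := by
  refine hasSubExpMGF_of_gradient_le hν hcov hb (hasFDerivAt_sum_mul_comp hσ.differentiable_one v)
    (by have := hσ.continuous_deriv_one; fun_prop)
    (integrable_finsetSum _ fun i _ =>
      ((memLp_comp_eval_of_isGaussian hΛ i).integrable (by norm_num)).const_mul _)
    (fun u => ?_) t₀
  calc (fun i => v i * deriv σ (u i)) ⬝ᵥ (fun i => v i * deriv σ (u i))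
    _ = ∑ i, v i ^ 2 * deriv σ (u i) ^ 2 := Finset.sum_congr rfl fun i _ => by ring
    _ ≤ ∑ i, v i ^ 2 * (Λ : ℝ) ^ 2 := by
        gcongr ∑ i, v i ^ 2 * ?_
        exact sq_deriv_le_of_lipschitzWith hΛ _
    _ ≤ 1 * (Λ : ℝ) ^ 2 := by
        rw [← Finset.sum_mul]
        gcongr
    _ = _ := one_mul _

theorem hasSubExpMGF_sum_mul_sq_comp (hσ : ContDiff ℝ 1 σ) (hΛ : LipschitzWith Λ σ)
    (hν : ν[id] = 0) (hcov : ∀ p, Var[fun u => u ⬝ᵥ p; ν] ≤ b * (p ⬝ᵥ p)) (hb : 0 ≤ b)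
    (hκ : 0 < κ) (hK : 0 ≤ K)
    (hexp : ∀ i, ∫⁻ u, ENNReal.ofReal (Real.exp (κ * σ (u i) ^ 2)) ∂ν ≤ ENNReal.ofReal K)
    (ht₀ : Real.pi ^ 2 / 8 * b * (4 * Λ ^ 2) * t₀ ^ 2 ≤ κ) (hv : ∑ i, v i ^ 2 ≤ 1) :
    HasSubExpMGF (fun u => ∑ i, v i * σ (u i) ^ 2)
      (Real.pi ^ 2 / 8 * b * (4 * Λ ^ 2) * K / κ) t₀ ν := by
  have hσc := hσ.continuous
  have hderiv : deriv (σ ^ 2) = fun s => 2 * σ s * deriv σ s := by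
    ext s
    simp [deriv_pow (hσ.differentiable_one s)]
  refine hasSubExpMGF_of_gradient_le_weighted_sum hν hcov hb
    (hasFDerivAt_sum_mul_comp (hσ.differentiable_one.pow 2) v)
    (by have := hσ.continuous_deriv_one; rw [hderiv]; fun_prop)
    (integrable_finsetSum _ fun i _ =>
      (memLp_comp_eval_of_isGaussian hΛ i).integrable_sq.const_mul _)
    (g := fun s => σ s ^ 2) (by positivity) (fun i => sq_nonneg (v i)) hv (fun u => ?_)
    (by fun_prop) hκ hK hexp ht₀
  rw [hderiv, dotProduct, Finset.mul_sum]
  refine Finset.sum_le_sum fun i _ => ?_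
  calc v i * (2 * σ (u i) * deriv σ (u i)) * (v i * (2 * σ (u i) * deriv σ (u i)))
    _ = 4 * deriv σ (u i) ^ 2 * (v i ^ 2 * σ (u i) ^ 2) := by ring
    _ ≤ 4 * Λ ^ 2 * (v i ^ 2 * σ (u i) ^ 2) := by
        gcongr 4 * ?_ * _
        exact sq_deriv_le_of_lipschitzWith hΛ _

theorem hasFDerivAt_comp_mul_comp [DecidableEq ι] (hσ : Differentiable ℝ σ) (i j : ι)
    (u : ι → ℝ) :
    HasFDerivAt (fun u : ι → ℝ => σ (u i) * σ (u j))
      (dotProductCLM (Pi.single i (deriv σ (u i) * σ (u j)) +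
        Pi.single j (σ (u i) * deriv σ (u j)))) u := by
  have hcoord (k : ι) := (hσ (u k)).hasDerivAt.comp_hasFDerivAt u
    (ContinuousLinearMap.proj (R := ℝ) (φ := fun _ : ι => ℝ) k).hasFDerivAt
  refine ((hcoord i).mul (hcoord j)).congr_fderiv ?_
  ext z
  simp only [Function.comp_apply, ContinuousLinearMap.proj_apply, _root_.add_apply,
    _root_.smul_apply, smul_eq_mul, dotProductCLM_apply, dotProduct_add, dotProduct_single]
  ring

theorem dotProduct_add_self_le (x y : ι → ℝ) :
    (x + y) ⬝ᵥ (x + y) ≤ 2 * (x ⬝ᵥ x + y ⬝ᵥ y) := by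
  have hsub := dotProduct_self_nonneg (x - y)
  simp only [sub_dotProduct, dotProduct_sub, add_dotProduct, dotProduct_add] at hsub ⊢
  linarith

theorem hasSubExpMGF_comp_mul_comp (hσ : ContDiff ℝ 1 σ) (hΛ : LipschitzWith Λ σ)
    (hν : ν[id] = 0) (hcov : ∀ p, Var[fun u => u ⬝ᵥ p; ν] ≤ b * (p ⬝ᵥ p)) (hb : 0 ≤ b)
    (hκ : 0 < κ) (hK : 0 ≤ K)
    (hexp : ∀ i, ∫⁻ u, ENNReal.ofReal (Real.exp (κ * σ (u i) ^ 2)) ∂ν ≤ ENNReal.ofReal K)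
    (ht₀ : Real.pi ^ 2 / 8 * b * (4 * Λ ^ 2) * t₀ ^ 2 ≤ κ) (i j : ι) :
    HasSubExpMGF (fun u => σ (u i) * σ (u j))
      (Real.pi ^ 2 / 8 * b * (4 * Λ ^ 2) * K / κ) t₀ ν := by
  classical
  have hσc := hσ.continuous
  have hderiv := hσ.continuous_deriv_one
  have hsingle (k : ι) : Continuous fun s : ℝ => (Pi.single k s : ι → ℝ) :=
    continuous_single (A := fun _ => ℝ) k
  refine hasSubExpMGF_of_gradient_le_weighted_sum hν hcov hb
    (hasFDerivAt_comp_mul_comp hσ.differentiable_one i j)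
    (((hsingle i).comp ((hderiv.comp (continuous_apply i)).mul (hσc.comp (continuous_apply j)))).add
      ((hsingle j).comp ((hσc.comp (continuous_apply i)).mul (hderiv.comp (continuous_apply j)))))
    ((memLp_comp_eval_of_isGaussian hΛ i).integrable_mul (memLp_comp_eval_of_isGaussian hΛ j))
    (q := fun k => ((if k = i then 1 else 0) + if k = j then 1 else 0) / 2) (g := fun s => σ s ^ 2)
    (by positivity) (fun k => ?_) ?_ (fun u => ?_) (by fun_prop) hκ hK hexp ht₀
  · positivity
  · rw [← Finset.sum_div, Finset.sum_add_distrib]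
    simp
  have hweights : ∑ k, ((if k = i then 1 else 0) + if k = j then 1 else 0) / 2 * σ (u k) ^ 2 =
      (σ (u i) ^ 2 + σ (u j) ^ 2) / 2 := by
    simp only [div_mul_eq_mul_div, ← Finset.sum_div, add_mul, Finset.sum_add_distrib, ite_mul,
      one_mul, zero_mul, Finset.sum_ite_eq', Finset.mem_univ, if_true]
  rw [hweights]
  refine (dotProduct_add_self_le _ _).trans ?_
  simp only [single_dotProduct, Pi.single_eq_same]
  nlinarith [mul_le_mul_of_nonneg_right (sq_deriv_le_of_lipschitzWith hΛ (u i))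
    (sq_nonneg (σ (u j))), mul_le_mul_of_nonneg_right (sq_deriv_le_of_lipschitzWith hΛ (u j))
    (sq_nonneg (σ (u i)))]

end GaussianConcentration

section GaussianWeights

variable {σ : ℝ → ℝ} {Λ : NNReal} {B : ℝ} {m n : ℕ} {X : Matrix (Fin m) (Fin n) ℝ}

theorem HasSubExpMGF.comp_of_map {Ω Ω' : Type*} [MeasurableSpace Ω] [MeasurableSpace Ω']
    {μ : Measure Ω} {φ : Ω → Ω'} {f : Ω' → ℝ} {C t₀ : ℝ} (h : HasSubExpMGF f C t₀ (μ.map φ))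
    (hf : Measurable f) (hφ : Measurable φ) : HasSubExpMGF (fun x => f (φ x)) C t₀ μ := by
  intro t ht
  have hmap := h t ht
  rwa [lintegral_map (by fun_prop) hφ,
    integral_map hφ.aemeasurable hf.aestronglyMeasurable] at hmap

theorem integral_sum_mul {Ω ι : Type*} [MeasurableSpace Ω] [Fintype ι] {μ : Measure Ω}
    {f : ι → Ω → ℝ} (hf : ∀ i, Integrable (f i) μ) (v : ι → ℝ) :
    ∫ x, ∑ i, v i * f i x ∂μ = ∑ i, v i * ∫ x, f i x ∂μ := by
  rw [integral_finsetSum _ fun i _ => (hf i).const_mul _]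
  exact Finset.sum_congr rfl fun i _ => integral_const_mul _ _

theorem col_dotProduct_col_self (X : Matrix (Fin m) (Fin n) ℝ) (α : Fin n) :
    X.col α ⬝ᵥ X.col α = ∑ i, X i α ^ 2 :=
  Finset.sum_congr rfl fun i _ => (pow_two (X i α)).symm

theorem memLp_comp_vecMul_gaussianVec (hΛ : LipschitzWith Λ σ) (X : Matrix (Fin m) (Fin n) ℝ)
    (α : Fin n) : MemLp (fun w => σ ((w ᵥ* X) α)) 2 (gaussianVec m) :=
  memLp_comp_dotProduct_gaussianVec hΛ (X.col α)

theorem variance_dotProduct_map_vecMul_le (hX : opNorm X ≤ B) (p : Fin n → ℝ) :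
    Var[fun u => u ⬝ᵥ p; (gaussianVec m).map fun w => w ᵥ* X] ≤ B ^ 2 * (p ⬝ᵥ p) := by
  rw [variance_dotProduct_map_vecMul]
  refine (dotProduct_mulVec_self_le X p).trans ?_
  gcongr
  exacts [dotProduct_self_nonneg p, opNorm_nonneg X]

theorem hasSubExpMGF_sum_mul_comp_vecMul (hσ : ContDiff ℝ 1 σ) (hΛ : LipschitzWith Λ σ)
    (hX : opNorm X ≤ B) {v : Fin n → ℝ} (hv : ∑ α, v α ^ 2 ≤ 1) (t₀ : ℝ) :
    HasSubExpMGF (fun w => ∑ α, v α * σ ((w ᵥ* X) α)) (Real.pi ^ 2 / 8 * B ^ 2 * Λ ^ 2) t₀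
      (gaussianVec m) :=
  (hasSubExpMGF_sum_mul_comp hσ hΛ (integral_id_map_vecMul X)
    (variance_dotProduct_map_vecMul_le hX) (sq_nonneg B) hv t₀).comp_of_map
    (by have := hσ.continuous; fun_prop) (by fun_prop)

theorem exists_hasSubExpMGF_quadratic_vecMul (hσ : ContDiff ℝ 1 σ) (hΛ : LipschitzWith Λ σ)
    (B : ℝ) :
    ∃ C ≥ 0, ∃ t₀ > 0, ∀ (m n : ℕ) (X : Matrix (Fin m) (Fin n) ℝ), opNorm X ≤ B →
      (∀ α, ∑ i, X i α ^ 2 ≤ 2) →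
      (∀ v : Fin n → ℝ, ∑ α, v α ^ 2 ≤ 1 →
        HasSubExpMGF (fun w => ∑ α, v α * σ ((w ᵥ* X) α) ^ 2) C t₀ (gaussianVec m)) ∧
      ∀ α β, HasSubExpMGF (fun w => σ ((w ᵥ* X) α) * σ ((w ᵥ* X) β)) C t₀ (gaussianVec m) := by
  obtain ⟨κ, hκ, K, hK, hexp⟩ := exists_lintegral_exp_sq_comp_dotProduct_le hΛ
  have hσc := hσ.continuous
  set a := Real.pi ^ 2 / 8 * B ^ 2 * (4 * Λ ^ 2)
  have ha : 0 ≤ a := by positivity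
  have ht₀ : a * √(κ / (a + 1)) ^ 2 ≤ κ := by
    rw [Real.sq_sqrt (div_nonneg hκ.le (add_nonneg ha zero_le_one)), mul_div_assoc',
      div_le_iff₀ (by positivity)]
    nlinarith
  refine ⟨a * K / κ, by positivity, √(κ / (a + 1)), by positivity, fun m n X hX hcol => ?_⟩
  have hexp' (α : Fin n) :
      ∫⁻ u, ENNReal.ofReal (Real.exp (κ * σ (u α) ^ 2)) ∂(gaussianVec m).map (fun w => w ᵥ* X) ≤
        ENNReal.ofReal K := by
    rw [lintegral_map (by fun_prop) (by fun_prop)]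
    exact hexp m (X.col α) ((col_dotProduct_col_self X α).trans_le (hcol α))
  have hcov := variance_dotProduct_map_vecMul_le hX
  exact ⟨fun v hv => (hasSubExpMGF_sum_mul_sq_comp hσ hΛ (integral_id_map_vecMul X) hcov
      (sq_nonneg B) hκ hK hexp' ht₀ hv).comp_of_map (by fun_prop) (by fun_prop),
    fun α β => (hasSubExpMGF_comp_mul_comp hσ hΛ (integral_id_map_vecMul X) hcov (sq_nonneg B)
      hκ hK hexp' ht₀ α β).comp_of_map (by fun_prop) (by fun_prop)⟩

theorem abs_integral_sum_mul_comp_vecMul_le (hΛ : LipschitzWith Λ σ)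
    (hmean : ∫ s, σ s ∂stdGaussian = 0) (hB : 0 ≤ B)
    (hX : ∑ α, ((∑ i, X i α ^ 2) - 1) ^ 2 ≤ B ^ 2) {v : Fin n → ℝ} (hv : ∑ α, v α ^ 2 ≤ 1) :
    |∫ w, ∑ α, v α * σ ((w ᵥ* X) α) ∂gaussianVec m| ≤ Λ * B := by
  have hmeans : ∑ α, (∫ w, σ ((w ᵥ* X) α) ∂gaussianVec m) ^ 2 ≤ (Λ * B) ^ 2 :=
    calc ∑ α, (∫ w, σ ((w ᵥ* X) α) ∂gaussianVec m) ^ 2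
        ≤ ∑ α, (Λ * ((∑ i, X i α ^ 2) - 1)) ^ 2 := Finset.sum_le_sum fun α _ => by
          have hα := abs_integral_comp_dotProduct_le hΛ hmean (X.col α)
          rw [col_dotProduct_col_self] at hα
          rw [← sq_abs, ← sq_abs (_ * _), abs_mul, NNReal.abs_eq]
          exact pow_le_pow_left₀ (abs_nonneg _) hα 2
      _ = Λ ^ 2 * ∑ α, ((∑ i, X i α ^ 2) - 1) ^ 2 := by simp only [mul_pow, Finset.mul_sum]
      _ ≤ (Λ * B) ^ 2 := by rw [mul_pow]; gcongr
  rw [integral_sum_mul (fun α => (memLp_comp_vecMul_gaussianVec hΛ X α).integrable (by norm_num))]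
  refine abs_le_of_sq_le_sq ((Finset.sum_mul_sq_le_sq_mul_sq _ _ _).trans ?_) (by positivity)
  exact (mul_le_mul hv hmeans (by positivity) zero_le_one).trans_eq (one_mul _)

end GaussianWeights

section Layer

variable {σ : ℝ → ℝ} {Λ : NNReal} {B C Γ δ ε t₀ : ℝ} {d m n : ℕ} {X : Matrix (Fin m) (Fin n) ℝ}

/-- One layer `σ(WX)/√d` of the network, as a function of its input `X` and its weights `W`. -/
noncomputable def layer (σ : ℝ → ℝ) (X : Matrix (Fin m) (Fin n) ℝ) (W : Fin d → Fin m → ℝ) :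
    Matrix (Fin d) (Fin n) ℝ :=
  (√d)⁻¹ • ((Matrix.of W * X).map σ)

theorem layer_apply (σ : ℝ → ℝ) (X : Matrix (Fin m) (Fin n) ℝ) (W : Fin d → Fin m → ℝ)
    (i : Fin d) (α : Fin n) : layer σ X W i α = (√d)⁻¹ * σ ((W i ᵥ* X) α) := rfl

theorem sum_layer_mul_layer (σ : ℝ → ℝ) (X : Matrix (Fin m) (Fin n) ℝ) (W : Fin d → Fin m → ℝ)
    (α β : Fin n) :
    ∑ i, layer σ X W i α * layer σ X W i β =
      (∑ i, σ ((W i ᵥ* X) α) * σ ((W i ᵥ* X) β)) / d := by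
  have hinv : (√(d : ℝ))⁻¹ * (√(d : ℝ))⁻¹ = (d : ℝ)⁻¹ := by
    rw [← mul_inv, Real.mul_self_sqrt (Nat.cast_nonneg d)]
  simp only [layer_apply, div_eq_mul_inv, ← hinv, Finset.sum_mul]
  exact Finset.sum_congr rfl fun i _ => by ring

theorem sum_layer_sq (σ : ℝ → ℝ) (X : Matrix (Fin m) (Fin n) ℝ) (W : Fin d → Fin m → ℝ)
    (α : Fin n) : ∑ i, layer σ X W i α ^ 2 = (∑ i, σ ((W i ᵥ* X) α) ^ 2) / d := by
  simpa only [pow_two] using sum_layer_mul_layer σ X W α α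

theorem sum_sq_le_one_of_norm_le_one {ι : Type*} [Fintype ι] {v : EuclideanSpace ℝ ι}
    (hv : ‖v‖ ≤ 1) : ∑ i, v i ^ 2 ≤ 1 := by
  rw [← EuclideanSpace.real_norm_sq_eq]
  exact pow_le_one₀ (norm_nonneg v) hv

theorem inner_toEuclideanLin_layer (σ : ℝ → ℝ) (X : Matrix (Fin m) (Fin n) ℝ)
    (W : Fin d → Fin m → ℝ) (v : EuclideanSpace ℝ (Fin n)) (u : EuclideanSpace ℝ (Fin d)) :
    inner ℝ u (Matrix.toEuclideanLin (layer σ X W) v) =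
      ∑ i, u i * ((√d)⁻¹ * ∑ α, v α * σ ((W i ᵥ* X) α)) := by
  simp only [PiLp.inner_apply, Matrix.toLpLin_apply, mulVec, dotProduct, layer_apply,
    Finset.mul_sum, RCLike.inner_apply, conj_trivial, Finset.sum_mul]
  exact Finset.sum_congr rfl fun i _ => Finset.sum_congr rfl fun α _ => by ring

theorem five_pow_mul_ofReal_exp_le (hn : n ≤ Γ * d) (c : ℝ) :
    (5 : ENNReal) ^ n * ENNReal.ofReal (Real.exp (-((2 * Γ + c) * d))) ≤
      ENNReal.ofReal (Real.exp (-(c * d))) :=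
  calc (5 : ENNReal) ^ n * ENNReal.ofReal (Real.exp (-((2 * Γ + c) * d)))
      ≤ ENNReal.ofReal (Real.exp (2 * n)) * ENNReal.ofReal (Real.exp (-((2 * Γ + c) * d))) := by
        gcongr
        exact five_pow_le_ofReal_exp n
    _ = ENNReal.ofReal (Real.exp (2 * n + -((2 * Γ + c) * d))) := by
        rw [Real.exp_add, ENNReal.ofReal_mul (Real.exp_pos _).le]
    _ ≤ ENNReal.ofReal (Real.exp (-(c * d))) := by gcongr; linarith

theorem measure_lt_opNorm_layer_le (hσ : ContDiff ℝ 1 σ) (hΛ : LipschitzWith Λ σ)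
    (hmean : ∫ s, σ s ∂stdGaussian = 0) (hX : IsOrthonormal ε B X) (hn : n ≤ Γ * d) :
    gaussianMat d m
        {W | 4 * (2 * Γ + 3 + Real.pi ^ 2 / 8 * B ^ 2 * Λ ^ 2 + Λ * B) < opNorm (layer σ X W)} ≤
      ENNReal.ofReal (Real.exp (-d)) := by
  obtain ⟨-, -, hop, hsq⟩ := hX
  set C := Real.pi ^ 2 / 8 * B ^ 2 * Λ ^ 2
  have hσc := hσ.continuous
  have hdirection (v : EuclideanSpace ℝ (Fin n)) (u : EuclideanSpace ℝ (Fin d)) (hv : ‖v‖ ≤ 1)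
      (hu : ‖u‖ ≤ 1) :
      gaussianMat d m {W | 2 * Γ + 3 + C + Λ * B ≤
        inner ℝ u (LinearMap.toContinuousLinearMap (Matrix.toEuclideanLin (layer σ X W)) v)} ≤
      ENNReal.ofReal (Real.exp (-((2 * 1 + (2 * Γ + 1)) * d))) := by
    have hv' := sum_sq_le_one_of_norm_le_one hv
    have htail := HasSubExpMGF.measure_pi_le_unit_sum_le
      (fun t => hasSubExpMGF_sum_mul_comp_vecMul (m := m) hσ hΛ hop hv' t) (by fun_prop)
      (by positivity) (sum_sq_le_one_of_norm_le_one hu) (2 * Γ + 3 + C)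
    rw [Fintype.card_fin,
      show d * (C - (2 * Γ + 3 + C)) = -((2 * 1 + (2 * Γ + 1)) * d) by ring] at htail
    refine (measure_mono fun W hW => ?_).trans htail
    simp only [Set.mem_ofPred_eq, LinearMap.coe_toContinuousLinearMap',
      inner_toEuclideanLin_layer] at hW ⊢
    linarith [abs_integral_sum_mul_comp_vecMul_le hΛ hmean ((opNorm_nonneg X).trans hop) hsq hv']
  refine (measure_four_mul_lt_opNorm_le hdirection).trans ?_
  rw [finrank_euclideanSpace_fin, finrank_euclideanSpace_fin]
  calc (5 : ENNReal) ^ n * (5 ^ d * ENNReal.ofReal (Real.exp (-((2 * 1 + (2 * Γ + 1)) * d))))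
      ≤ 5 ^ n * ENNReal.ofReal (Real.exp (-((2 * Γ + 1) * d))) := by
        gcongr
        exact five_pow_mul_ofReal_exp_le (one_mul (d : ℝ)).ge _
    _ ≤ ENNReal.ofReal (Real.exp (-d)) := by
        simpa only [one_mul] using five_pow_mul_ofReal_exp_le hn 1

theorem sum_mul_sum_layer_sq_sub (hΛ : LipschitzWith Λ σ) (v : Fin n → ℝ)
    (W : Fin d → Fin m → ℝ) :
    ∑ α, v α * ((∑ i, layer σ X W i α ^ 2) - ∫ w, σ ((w ᵥ* X) α) ^ 2 ∂gaussianVec m) =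
      (∑ i, ∑ α, v α * σ ((W i ᵥ* X) α) ^ 2) / d -
        ∫ w, ∑ α, v α * σ ((w ᵥ* X) α) ^ 2 ∂gaussianVec m := by
  rw [integral_sum_mul fun α => (memLp_comp_vecMul_gaussianVec hΛ X α).integrable_sq,
    Finset.sum_comm, Finset.sum_div, ← Finset.sum_sub_distrib]
  simp only [sum_layer_sq, ← Finset.mul_sum, mul_sub, mul_div_assoc]

theorem measure_lt_sum_sq_layer_sub_le (hΛ : LipschitzWith Λ σ) (ht₀ : 0 < t₀)
    (h : ∀ v : Fin n → ℝ, ∑ α, v α ^ 2 ≤ 1 →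
      HasSubExpMGF (fun w => ∑ α, v α * σ ((w ᵥ* X) α) ^ 2) C t₀ (gaussianVec m))
    (hn : n ≤ Γ * d) :
    gaussianMat d m {W | (2 * ((C * t₀ ^ 2 + 2 * Γ + 1) / t₀)) ^ 2 <
        ∑ α, ((∑ i, layer σ X W i α ^ 2) - ∫ w, σ ((w ᵥ* X) α) ^ 2 ∂gaussianVec m) ^ 2} ≤
      ENNReal.ofReal (Real.exp (-d)) := by
  set τ := (C * t₀ ^ 2 + 2 * Γ + 1) / t₀ with hτ
  have hσc := hΛ.continuous
  let Z : (Fin d → Fin m → ℝ) → EuclideanSpace ℝ (Fin n) := fun W =>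
    WithLp.toLp 2 fun α => (∑ i, layer σ X W i α ^ 2) - ∫ w, σ ((w ᵥ* X) α) ^ 2 ∂gaussianVec m
  have hdirection (v : EuclideanSpace ℝ (Fin n)) (hv : ‖v‖ ≤ 1) :
      gaussianMat d m {W | τ ≤ inner ℝ v (Z W)} ≤
        ENNReal.ofReal (Real.exp (-((2 * Γ + 1) * d))) := by
    have htail := (h v (sum_sq_le_one_of_norm_le_one hv)).measure_pi_le_average_sub_le
      (ι := Fin d) (by fun_prop) ht₀.le le_rfl τ
    rw [Fintype.card_fin,
      show d * (C * t₀ ^ 2 - t₀ * τ) = -((2 * Γ + 1) * d) by rw [hτ]; field_simp; ring] at htail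
    refine (measure_mono fun W hW => ?_).trans htail
    rw [Set.mem_ofPred_eq, real_inner_comm] at hW
    rwa [Set.mem_ofPred_eq, ← sum_mul_sum_layer_sq_sub hΛ]
  have hset : {W : Fin d → Fin m → ℝ | (2 * τ) ^ 2 < ∑ α, ((∑ i, layer σ X W i α ^ 2) -
      ∫ w, σ ((w ᵥ* X) α) ^ 2 ∂gaussianVec m) ^ 2} ⊆ {W | 2 * τ < ‖Z W‖} := fun W hW =>
    lt_of_pow_lt_pow_left₀ 2 (norm_nonneg _) (hW.trans_eq (EuclideanSpace.real_norm_sq_eq _).symm)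
  refine (measure_mono hset).trans ((measure_two_mul_lt_norm_le hdirection).trans ?_)
  rw [finrank_euclideanSpace_fin]
  simpa only [one_mul] using five_pow_mul_ofReal_exp_le hn 1

theorem measure_lt_abs_sum_layer_mul_layer_sub_le (hσ : Measurable σ) (hC : 0 ≤ C) {α β : Fin n}
    (h : HasSubExpMGF (fun w => σ ((w ᵥ* X) α) * σ ((w ᵥ* X) β)) C t₀ (gaussianVec m))
    (hδ : 0 ≤ δ) (hδt₀ : δ ≤ 2 * (C + 1) * t₀) :
    gaussianMat d m {W | δ < |∑ i, layer σ X W i α * layer σ X W i β -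
        ∫ w, σ ((w ᵥ* X) α) * σ ((w ᵥ* X) β) ∂gaussianVec m|} ≤
      2 * ENNReal.ofReal (Real.exp (-(d * δ ^ 2 / (4 * (C + 1))))) := by
  have htail := h.measure_pi_lt_abs_average_sub_le (ι := Fin d) (by fun_prop)
    (div_nonneg hδ (by positivity : 0 ≤ 2 * (C + 1))) ((div_le_iff₀' (by positivity)).2 hδt₀) δ
  rw [Fintype.card_fin] at htail
  simp only [sum_layer_mul_layer]
  refine htail.trans ?_
  gcongr
  calc d * (C * (δ / (2 * (C + 1))) ^ 2 - δ / (2 * (C + 1)) * δ)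
      ≤ d * ((C + 1) * (δ / (2 * (C + 1))) ^ 2 - δ / (2 * (C + 1)) * δ) := by
        gcongr; linarith
    _ = -(d * δ ^ 2 / (4 * (C + 1))) := by field_simp; ring

end Layer

section LayerStep

variable {σ : ℝ → ℝ} {Λ : NNReal} {B C Γ δ ε t₀ : ℝ} {d m n : ℕ} {X : Matrix (Fin m) (Fin n) ℝ}

theorem abs_integral_sq_comp_vecMul_sub_one_le (hΛ : LipschitzWith Λ σ)
    (hvar : ∫ s, σ s ^ 2 ∂stdGaussian = 1) (hX : IsOrthonormal ε B X) (hε : ε ≤ 1 / 2)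
    (α : Fin n) :
    |∫ w, σ ((w ᵥ* X) α) ^ 2 ∂gaussianVec m - 1| ≤ Λ * (Λ + 2) * |(∑ i, X i α ^ 2) - 1| := by
  have hα : |X.col α ⬝ᵥ X.col α - 1| ≤ 1 := by
    rw [col_dotProduct_col_self]
    linarith [hX.1 α]
  rw [← col_dotProduct_col_self]
  exact abs_integral_sq_comp_dotProduct_sub_one_le hΛ hvar hα

theorem sum_sq_sub_one_le_of_sum_sq_sub_le {ι : Type*} [Fintype ι] {a c r : ι → ℝ} {k T : ℝ}
    (hT : 0 ≤ T) (hB : 0 ≤ B) (hk : 0 ≤ k) (hac : ∑ i, (a i - c i) ^ 2 ≤ T ^ 2)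
    (hc : ∀ i, |c i - 1| ≤ k * |r i|) (hr : ∑ i, r i ^ 2 ≤ B ^ 2) :
    ∑ i, (a i - 1) ^ 2 ≤ (2 * T + 2 * (k * B)) ^ 2 :=
  calc ∑ i, (a i - 1) ^ 2 ≤ ∑ i, (2 * (a i - c i) ^ 2 + 2 * (k * |r i|) ^ 2) :=
        Finset.sum_le_sum fun i _ => by
          have hci := sq_le_sq' (by linarith [abs_nonneg (c i - 1), hc i]) (hc i)
          rw [sq_abs] at hci
          nlinarith [sq_nonneg (a i - c i - (c i - 1))]
    _ = 2 * ∑ i, (a i - c i) ^ 2 + 2 * (k ^ 2 * ∑ i, r i ^ 2) := by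
        simp only [Finset.sum_add_distrib, mul_pow, sq_abs, Finset.mul_sum]
    _ ≤ 2 * T ^ 2 + 2 * (k ^ 2 * B ^ 2) := by gcongr
    _ ≤ (2 * T + 2 * (k * B)) ^ 2 := by
        nlinarith [mul_nonneg hT (mul_nonneg hk hB), sq_nonneg T, sq_nonneg (k * B)]

theorem isOrthonormal_layer_of_concentrated (hΛ : LipschitzWith Λ σ)
    (hmean : ∫ s, σ s ∂stdGaussian = 0) (hvar : ∫ s, σ s ^ 2 ∂stdGaussian = 1)
    (hX : IsOrthonormal ε B X) (hε : ε ≤ 1 / 2) {W : Fin d → Fin m → ℝ} {B₁ T : ℝ} (hT : 0 ≤ T)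
    (hop : opNorm (layer σ X W) ≤ B₁)
    (hsq : ∑ α, ((∑ i, layer σ X W i α ^ 2) - ∫ w, σ ((w ᵥ* X) α) ^ 2 ∂gaussianVec m) ^ 2 ≤ T ^ 2)
    (hpair : ∀ α β, |∑ i, layer σ X W i α * layer σ X W i β -
      ∫ w, σ ((w ᵥ* X) α) * σ ((w ᵥ* X) β) ∂gaussianVec m| ≤ δ) :
    IsOrthonormal (δ + Λ * (Λ + 2) ^ 2 * ε) (B₁ + (2 * T + 2 * (Λ * (Λ + 2) * B)))
      (layer σ X W) := by
  have hB : 0 ≤ B := (opNorm_nonneg X).trans hX.2.2.1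
  have hB₁ : 0 ≤ B₁ := (opNorm_nonneg _).trans hop
  have hnorm := abs_integral_sq_comp_vecMul_sub_one_le hΛ hvar hX hε
  refine ⟨fun α => ?_, fun α β hαβ => ?_, hop.trans (le_add_of_nonneg_right (by positivity)), ?_⟩
  · have hself := hpair α α
    simp only [← pow_two] at hself
    have hε0 : 0 ≤ ε := (abs_nonneg _).trans (hX.1 α)
    calc |∑ i, layer σ X W i α ^ 2 - 1|
        ≤ δ + Λ * (Λ + 2) * |(∑ i, X i α ^ 2) - 1| :=
          (abs_sub_le _ _ _).trans (add_le_add hself (hnorm α))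
      _ ≤ δ + Λ * (Λ + 2) * ε := by gcongr; exact hX.1 α
      _ ≤ δ + Λ * (Λ + 2) ^ 2 * ε := by
          gcongr
          exact le_self_pow₀ (by linarith [Λ.coe_nonneg]) two_ne_zero
  · have hcross : |∫ w, σ ((w ᵥ* X) α) * σ ((w ᵥ* X) β) ∂gaussianVec m| ≤
        Λ * (Λ + 2) ^ 2 * ε :=
      abs_integral_comp_mul_comp_le (x := X.col α) (y := X.col β) hΛ hmean hvar hε
        (by rw [col_dotProduct_col_self]; exact hX.1 α)
        (by rw [col_dotProduct_col_self]; exact hX.1 β) (hX.2.1 α β hαβ)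
    linarith [abs_sub_abs_le_abs_sub (∑ i, layer σ X W i α * layer σ X W i β)
      (∫ w, σ ((w ᵥ* X) α) * σ ((w ᵥ* X) β) ∂gaussianVec m), hpair α β]
  · refine (sum_sq_sub_one_le_of_sum_sq_sub_le hT hB (by positivity) hsq hnorm hX.2.2.2).trans
      (pow_le_pow_left₀ (by positivity) ?_ 2)
    exact le_add_of_nonneg_left hB₁

theorem measure_not_isOrthonormal_layer_le (hσ : ContDiff ℝ 1 σ) (hΛ : LipschitzWith Λ σ)
    (hmean : ∫ s, σ s ∂stdGaussian = 0) (hvar : ∫ s, σ s ^ 2 ∂stdGaussian = 1)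
    (hC : 0 ≤ C) (ht₀ : 0 < t₀) (hΓ : 0 ≤ Γ)
    (hlin : ∀ v : Fin n → ℝ, ∑ α, v α ^ 2 ≤ 1 →
      HasSubExpMGF (fun w => ∑ α, v α * σ ((w ᵥ* X) α) ^ 2) C t₀ (gaussianVec m))
    (hprod : ∀ α β,
      HasSubExpMGF (fun w => σ ((w ᵥ* X) α) * σ ((w ᵥ* X) β)) C t₀ (gaussianVec m))
    (hX : IsOrthonormal ε B X) (hε : ε ≤ 1 / 2) (hδ : 0 ≤ δ) (hδt₀ : δ ≤ 2 * (C + 1) * t₀)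
    (hn : n ≤ Γ * d) :
    gaussianMat d m {W | ¬ IsOrthonormal (δ + Λ * (Λ + 2) ^ 2 * ε)
        (4 * (2 * Γ + 3 + Real.pi ^ 2 / 8 * B ^ 2 * Λ ^ 2 + Λ * B) +
          (2 * (2 * ((C * t₀ ^ 2 + 2 * Γ + 1) / t₀)) + 2 * (Λ * (Λ + 2) * B))) (layer σ X W)} ≤
      ENNReal.ofReal (2 * Real.exp (-d) +
        n ^ 2 * (2 * Real.exp (-(d * δ ^ 2 / (4 * (C + 1)))))) := by
  set B₁ := 4 * (2 * Γ + 3 + Real.pi ^ 2 / 8 * B ^ 2 * Λ ^ 2 + Λ * B)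
  set T := 2 * ((C * t₀ ^ 2 + 2 * Γ + 1) / t₀)
  have hT : 0 ≤ T := by positivity
  let badOp : Set (Fin d → Fin m → ℝ) := {W | B₁ < opNorm (layer σ X W)}
  let badSq : Set (Fin d → Fin m → ℝ) := {W | T ^ 2 < ∑ α, ((∑ i, layer σ X W i α ^ 2) -
    ∫ w, σ ((w ᵥ* X) α) ^ 2 ∂gaussianVec m) ^ 2}
  let badPair (α β : Fin n) : Set (Fin d → Fin m → ℝ) := {W | δ < |∑ i, layer σ X W i α *
    layer σ X W i β - ∫ w, σ ((w ᵥ* X) α) * σ ((w ᵥ* X) β) ∂gaussianVec m|}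
  have hsub : {W | ¬ IsOrthonormal (δ + Λ * (Λ + 2) ^ 2 * ε)
      (B₁ + (2 * T + 2 * (Λ * (Λ + 2) * B))) (layer σ X W)} ⊆
      badOp ∪ badSq ∪ ⋃ α, ⋃ β, badPair α β := fun W hW => by
    contrapose! hW
    simp only [Set.mem_union, Set.mem_iUnion, not_or, not_exists, badOp, badSq, badPair,
      Set.mem_ofPred_eq, not_lt, not_not] at hW ⊢
    exact isOrthonormal_layer_of_concentrated hΛ hmean hvar hX hε hT hW.1.1 hW.1.2 hW.2
  calc _ ≤ gaussianMat d m badOp + gaussianMat d m badSq +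
        ∑ α, ∑ β, gaussianMat d m (badPair α β) := by
        exact (measure_mono hsub).trans ((measure_union_le _ _).trans (add_le_add
          (measure_union_le _ _) ((measure_iUnion_fintype_le _ _).trans
            (Finset.sum_le_sum fun α _ => measure_iUnion_fintype_le _ _))))
    _ ≤ ENNReal.ofReal (Real.exp (-d)) + ENNReal.ofReal (Real.exp (-d)) + ∑ α : Fin n, ∑ β : Fin n,
        2 * ENNReal.ofReal (Real.exp (-(d * δ ^ 2 / (4 * (C + 1))))) := by
        gcongr with α _ β _
        · exact measure_lt_opNorm_layer_le hσ hΛ hmean hX hn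
        · exact measure_lt_sum_sq_layer_sub_le hΛ ht₀ hlin hn
        · exact measure_lt_abs_sum_layer_mul_layer_sub_le hσ.continuous.measurable hC (hprod α β)
            hδ hδt₀
    _ = _ := by
        rw [ENNReal.ofReal_add (by positivity) (by positivity), ENNReal.ofReal_mul (by positivity),
          ENNReal.ofReal_mul (by positivity), ENNReal.ofReal_mul (by positivity),
          ENNReal.ofReal_pow (by positivity)]
        simp only [ENNReal.ofReal_ofNat, ENNReal.ofReal_natCast, Finset.sum_const,
          Finset.card_univ, Fintype.card_fin, nsmul_eq_mul]
        ring

theorem exp_neg_le_div_sq (hn : n ≠ 0) (hnd : n ≤ Γ * d) :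
    Real.exp (-d) ≤ 2 * Γ ^ 2 / n ^ 2 := by
  have hn' : (0 : ℝ) < n := by positivity
  have hd : (0 : ℝ) < d := by
    refine (Nat.cast_nonneg d).lt_of_ne fun h => ?_
    rw [← h, mul_zero] at hnd
    linarith
  have hΓ : 0 < Γ := pos_of_mul_pos_left (hn'.trans_le hnd) hd.le
  have hexp : (d : ℝ) ^ 2 / 2 ≤ Real.exp d := by
    simpa using Real.pow_div_factorial_le_exp (d : ℝ) hd.le 2
  calc Real.exp (-d) ≤ ((d : ℝ) ^ 2 / 2)⁻¹ := by
        rw [Real.exp_neg]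
        gcongr
    _ = 2 * Γ ^ 2 / (Γ * d) ^ 2 := by field
    _ ≤ 2 * Γ ^ 2 / n ^ 2 := by gcongr

theorem sq_mul_exp_neg_rpow_le {c x : ℝ} (hc : 0 < c) (hx : 0 < x) :
    x ^ 2 * Real.exp (-(c * x ^ (1 / 4 : ℝ))) ≤ Nat.factorial 16 / c ^ 16 / x ^ 2 := by
  have hpow : (x ^ (1 / 4 : ℝ)) ^ 16 = x ^ 4 := by
    rw [← Real.rpow_natCast, ← Real.rpow_mul hx.le, ← Real.rpow_natCast]
    norm_num
  have hexp := Real.pow_div_factorial_le_exp (c * x ^ (1 / 4 : ℝ)) (by positivity) 16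
  rw [mul_pow, hpow] at hexp
  calc x ^ 2 * Real.exp (-(c * x ^ (1 / 4 : ℝ)))
      ≤ x ^ 2 * (c ^ 16 * x ^ 4 / Nat.factorial 16)⁻¹ := by
        rw [Real.exp_neg]
        gcongr
    _ = Nat.factorial 16 / c ^ 16 / x ^ 2 := by field

theorem inv_mul_rpow_le_mul_rpow_sq {b : ℝ} (hb : 0 < b) (hΓ : 0 < Γ) (hn : n ≠ 0)
    (hnd : n ≤ Γ * d) :
    (b * Γ)⁻¹ * (n : ℝ) ^ (1 / 4 : ℝ) ≤ d * ((n : ℝ) ^ (-3 / 8 : ℝ)) ^ 2 / b := by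
  have hn' : (0 : ℝ) < n := by positivity
  have hpow : (n : ℝ) ^ (1 / 4 : ℝ) = n * ((n : ℝ) ^ (-3 / 8 : ℝ)) ^ 2 := by
    nth_rw 2 [← Real.rpow_one (n : ℝ)]
    rw [← Real.rpow_natCast, ← Real.rpow_mul hn'.le, ← Real.rpow_add hn']
    norm_num
  calc (b * Γ)⁻¹ * (n : ℝ) ^ (1 / 4 : ℝ)
      ≤ (b * Γ)⁻¹ * (Γ * d * ((n : ℝ) ^ (-3 / 8 : ℝ)) ^ 2) := by rw [hpow]; gcongr
    _ = d * ((n : ℝ) ^ (-3 / 8 : ℝ)) ^ 2 / b := by field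

theorem exists_measure_not_isOrthonormal_layer_le (hσ : ContDiff ℝ 1 σ) (hΛ : LipschitzWith Λ σ)
    (hmean : ∫ s, σ s ∂stdGaussian = 0) (hvar : ∫ s, σ s ^ 2 ∂stdGaussian = 1) (hΓ : 0 < Γ)
    (B : ℝ) :
    ∃ B' K : ℝ, ∀ᶠ n : ℕ in atTop, ∀ d m : ℕ, n ≤ Γ * d → ∀ ε ≤ 1 / 2,
      ∀ X : Matrix (Fin m) (Fin n) ℝ, IsOrthonormal ε B X →
        gaussianMat d m {W | ¬ IsOrthonormal ((n : ℝ) ^ (-3 / 8 : ℝ) + Λ * (Λ + 2) ^ 2 * ε) B'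
          (layer σ X W)} ≤ ENNReal.ofReal (K / n ^ 2) := by
  obtain ⟨C, hC, t₀, ht₀, hmgf⟩ := exists_hasSubExpMGF_quadratic_vecMul hσ hΛ B
  have hδ : Tendsto (fun n : ℕ => (n : ℝ) ^ (-3 / 8 : ℝ)) atTop (𝓝 0) := by
    simpa only [neg_div, Function.comp_def] using
      (tendsto_rpow_neg_atTop (by norm_num : (0 : ℝ) < 3 / 8)).comp tendsto_natCast_atTop_atTop
  set b := 4 * (C + 1)
  refine ⟨4 * (2 * Γ + 3 + Real.pi ^ 2 / 8 * B ^ 2 * Λ ^ 2 + Λ * B) +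
      (2 * (2 * ((C * t₀ ^ 2 + 2 * Γ + 1) / t₀)) + 2 * (Λ * (Λ + 2) * B)),
    2 * (2 * Γ ^ 2) + 2 * (Nat.factorial 16 / (b * Γ)⁻¹ ^ 16), ?_⟩
  filter_upwards [eventually_ne_atTop 0,
    hδ.eventually_le_const (by positivity : 0 < 2 * (C + 1) * t₀)] with n hn hδt₀ d m hnd ε hε X hX
  have hcol (α : Fin n) : ∑ i, X i α ^ 2 ≤ 2 := by linarith [(abs_le.1 (hX.1 α)).2]
  obtain ⟨hlin, hprod⟩ := hmgf m n X hX.2.2.1 hcol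
  refine (measure_not_isOrthonormal_layer_le hσ hΛ hmean hvar hC ht₀ hΓ.le hlin hprod hX hε
    (by positivity) hδt₀ hnd).trans (ENNReal.ofReal_le_ofReal ?_)
  calc 2 * Real.exp (-d) + n ^ 2 * (2 * Real.exp (-(d * ((n : ℝ) ^ (-3 / 8 : ℝ)) ^ 2 / b)))
      ≤ 2 * Real.exp (-d) +
          2 * (n ^ 2 * Real.exp (-((b * Γ)⁻¹ * (n : ℝ) ^ (1 / 4 : ℝ)))) := by
        rw [mul_left_comm]
        gcongr
        exact inv_mul_rpow_le_mul_rpow_sq (by positivity) hΓ hn hnd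
    _ ≤ 2 * (2 * Γ ^ 2 / n ^ 2) + 2 * (Nat.factorial 16 / (b * Γ)⁻¹ ^ 16 / n ^ 2) := by
        gcongr
        · exact exp_neg_le_div_sq hn hnd
        · exact sq_mul_exp_neg_rpow_le (by positivity) (by positivity)
    _ = (2 * (2 * Γ ^ 2) + 2 * (Nat.factorial 16 / (b * Γ)⁻¹ ^ 16)) / n ^ 2 := by ring

end LayerStep

section MeasurePi

variable {ι : Type*} [Fintype ι] [DecidableEq ι] {E : ι → Type*} [∀ i, MeasurableSpace (E i)]
  {μ : ∀ i, Measure (E i)} [∀ i, IsProbabilityMeasure (μ i)]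

theorem measure_pi_le_of_forall_update (i : ι) {s : Set (∀ i, E i)} (hs : MeasurableSet s)
    {p : ENNReal} (h : ∀ x, μ i {y | Function.update x i y ∈ s} ≤ p) : Measure.pi μ s ≤ p := by
  have hmarginal : ∫⋯∫⁻_{i}, s.indicator 1 ∂μ ≤ ∫⋯∫⁻_{i}, (fun _ => p) ∂μ := by
    rw [lmarginal_singleton, lmarginal_singleton]
    intro x
    calc ∫⁻ y, s.indicator 1 (Function.update x i y) ∂μ i
        = μ i (Function.update x i ⁻¹' s) :=
          lintegral_indicator_one (measurable_update x hs)
      _ ≤ p := h x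
      _ = ∫⁻ _, p ∂μ i := by simp
  simpa [lintegral_indicator_one hs] using
    lintegral_le_of_lmarginal_le {i} (measurable_one.indicator hs) measurable_const hmarginal

end MeasurePi

section WithHighProb

variable {Ω : Type*} [MeasurableSpace Ω] {μ : Measure Ω} {p q : ℕ → Ω → Prop}

/-- The events `p n` hold with high probability: their failure probabilities are `O(n⁻²)`, which
is summable, so that the Borel–Cantelli lemma applies. -/
def WithHighProb (μ : Measure Ω) (p : ℕ → Ω → Prop) : Prop :=
  (fun n => μ.real {ω | ¬ p n ω}) =O[atTop] fun n : ℕ => ((n : ℝ) ^ 2)⁻¹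

theorem withHighProb_of_eventually_le {K : ℝ}
    (h : ∀ᶠ n : ℕ in atTop, μ {ω | ¬ p n ω} ≤ ENNReal.ofReal (K / n ^ 2)) : WithHighProb μ p := by
  refine Asymptotics.IsBigO.of_bound |K| (h.mono fun n hn => ?_)
  calc ‖μ.real {ω | ¬ p n ω}‖ = μ.real {ω | ¬ p n ω} := Real.norm_of_nonneg measureReal_nonneg
    _ ≤ max (K / n ^ 2) 0 := ENNReal.toReal_mono ENNReal.ofReal_ne_top hn
    _ ≤ |K / n ^ 2| := max_le (le_abs_self _) (abs_nonneg _)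
    _ = |K| * ‖((n : ℝ) ^ 2)⁻¹‖ := by rw [div_eq_mul_inv, abs_mul, Real.norm_eq_abs]

variable [IsFiniteMeasure μ]

theorem WithHighProb.mono (hp : WithHighProb μ p) (h : ∀ n ω, p n ω → q n ω) :
    WithHighProb μ q :=
  (Asymptotics.isBigO_of_le _ fun n => by
    have hsub : {ω | ¬ q n ω} ⊆ {ω | ¬ p n ω} := fun ω => mt (h n ω)
    simpa only [Real.norm_of_nonneg measureReal_nonneg] using measureReal_mono hsub).trans hp

theorem WithHighProb.mp (hp : WithHighProb μ p) (hpq : WithHighProb μ fun n ω => p n ω → q n ω) :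
    WithHighProb μ q :=
  (Asymptotics.isBigO_of_le _ fun n => by
    have hsub : {ω | ¬ q n ω} ⊆ {ω | ¬ p n ω} ∪ {ω | ¬ (p n ω → q n ω)} := fun ω hq =>
      (em (p n ω)).symm.imp id fun hp hpq => hq (hpq hp)
    rw [Real.norm_of_nonneg measureReal_nonneg, Real.norm_of_nonneg (by positivity)]
    exact (measureReal_mono hsub).trans (measureReal_union_le _ _)).trans (hp.add hpq)

theorem WithHighProb.ae_eventually (hp : WithHighProb μ p) : ∀ᵐ ω ∂μ, ∀ᶠ n in atTop, p n ω := by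
  have hsummable : Summable fun n => μ.real {ω | ¬ p n ω} :=
    summable_of_isBigO_nat (Real.summable_nat_pow_inv.2 one_lt_two) hp
  have htsum : ∑' n, μ {ω | ¬ p n ω} ≠ ⊤ := by
    simpa [ofReal_measureReal] using hsummable.tsum_ofReal_ne_top
  filter_upwards [ae_eventually_notMem htsum] with ω hω
  exact hω.mono fun n => not_not.1

end WithHighProb

section Network

variable {σ : ℝ → ℝ} {ε ε' B B' : ℝ} {n : ℕ}

theorem IsOrthonormal.mono {m : ℕ} {X : Matrix (Fin m) (Fin n) ℝ} (hX : IsOrthonormal ε B X)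
    (hε : ε ≤ ε') (hB : B ≤ B') : IsOrthonormal ε' B' X :=
  ⟨fun α => (hX.1 α).trans hε, fun α β hαβ => (hX.2.1 α β hαβ).trans hε, hX.2.2.1.trans hB,
    hX.2.2.2.trans (pow_le_pow_left₀ ((opNorm_nonneg X).trans hX.2.2.1) hB 2)⟩

@[fun_prop]
theorem continuous_opNorm {m : ℕ} : Continuous (opNorm : Matrix (Fin m) (Fin n) ℝ → ℝ) :=
  (LinearMap.continuous_of_finiteDimensional
    ((toEuclideanLin (𝕜 := ℝ) (m := Fin m) (n := Fin n)).trans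
      LinearMap.toContinuousLinearMap).toLinearMap).norm

theorem isClosed_isOrthonormal {m : ℕ} (ε B : ℝ) :
    IsClosed {X : Matrix (Fin m) (Fin n) ℝ | IsOrthonormal ε B X} := by
  simp only [IsOrthonormal, Set.ofPred_and, Set.ofPred_forall]
  refine (isClosed_iInter fun α => ?_).inter ((isClosed_iInter fun α => isClosed_iInter fun β =>
    isClosed_iInter fun _ => ?_).inter (IsClosed.inter ?_ ?_)) <;>
  exact isClosed_le (by fun_prop) (by fun_prop)

variable {d : ℕ → ℕ} {L ℓ : ℕ}

/-- The weights of the first `L` layers, extended by zero to a sequence of weights indexed by all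
layers, which is the form that `netLayer` takes. -/
noncomputable def extendWeights (V : (ℓ : Fin L) → Fin (d (ℓ + 1)) → Fin (d ℓ) → ℝ) (ℓ : ℕ) :
    Fin (d (ℓ + 1)) → Fin (d ℓ) → ℝ :=
  if h : ℓ < L then V ⟨ℓ, h⟩ else 0

theorem continuous_extendWeights (ℓ : ℕ) :
    Continuous fun V : (ℓ : Fin L) → Fin (d (ℓ + 1)) → Fin (d ℓ) → ℝ => extendWeights V ℓ := by
  unfold extendWeights
  split_ifs with h <;> fun_prop

theorem netLayer_congr {W W' : (ℓ : ℕ) → Fin (d (ℓ + 1)) → Fin (d ℓ) → ℝ}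
    (X0 : Matrix (Fin (d 0)) (Fin n) ℝ) (h : ∀ k < ℓ, W k = W' k) :
    netLayer σ d n W X0 ℓ = netLayer σ d n W' X0 ℓ := by
  induction ℓ with
  | zero => rfl
  | succ ℓ ih => rw [netLayer, netLayer, ih fun k hk => h k (by omega), h ℓ ℓ.lt_succ_self]

theorem continuous_netLayer_extendWeights (hσ : Continuous σ)
    (X0 : Matrix (Fin (d 0)) (Fin n) ℝ) (ℓ : ℕ) :
    Continuous fun V : (ℓ : Fin L) → Fin (d (ℓ + 1)) → Fin (d ℓ) → ℝ =>
      netLayer σ d n (extendWeights V) X0 ℓ := by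
  induction ℓ with
  | zero => exact continuous_const
  | succ ℓ ih =>
    have hW : Continuous fun V : (ℓ : Fin L) → Fin (d (ℓ + 1)) → Fin (d ℓ) → ℝ =>
      Matrix.of (extendWeights V ℓ) := continuous_extendWeights ℓ
    exact ((hW.matrix_mul ih).matrix_map hσ).const_smul (Real.sqrt (d (ℓ + 1)))⁻¹

theorem netLayer_extendWeights_update_self (hℓ : ℓ < L)
    (V : (ℓ : Fin L) → Fin (d (ℓ + 1)) → Fin (d ℓ) → ℝ) (X0 : Matrix (Fin (d 0)) (Fin n) ℝ)
    (w : Fin (d (ℓ + 1)) → Fin (d ℓ) → ℝ) :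
    netLayer σ d n (extendWeights (Function.update V ⟨ℓ, hℓ⟩ w)) X0 ℓ =
      netLayer σ d n (extendWeights V) X0 ℓ := by
  refine netLayer_congr X0 fun k hk => ?_
  have hne : (⟨k, hk.trans hℓ⟩ : Fin L) ≠ ⟨ℓ, hℓ⟩ := Fin.ne_of_val_ne hk.ne
  simp only [extendWeights, hk.trans hℓ, dite_true, Function.update_of_ne hne]

theorem netLayer_extendWeights_update_succ (hℓ : ℓ < L)
    (V : (ℓ : Fin L) → Fin (d (ℓ + 1)) → Fin (d ℓ) → ℝ) (X0 : Matrix (Fin (d 0)) (Fin n) ℝ)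
    (w : Fin (d (ℓ + 1)) → Fin (d ℓ) → ℝ) :
    netLayer σ d n (extendWeights (Function.update V ⟨ℓ, hℓ⟩ w)) X0 (ℓ + 1) =
      layer σ (netLayer σ d n (extendWeights V) X0 ℓ) w := by
  rw [netLayer, netLayer_extendWeights_update_self]
  simp only [extendWeights, hℓ, dite_true, Function.update_self, layer]

theorem measure_isOrthonormal_and_not_isOrthonormal_succ_le (hσ : Continuous σ) (hℓ : ℓ < L)
    (X0 : Matrix (Fin (d 0)) (Fin n) ℝ) {p : ENNReal}
    (h : ∀ X : Matrix (Fin (d ℓ)) (Fin n) ℝ, IsOrthonormal ε B X →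
      gaussianMat (d (ℓ + 1)) (d ℓ) {w | ¬ IsOrthonormal ε' B' (layer σ X w)} ≤ p) :
    Measure.pi (fun ℓ : Fin L => gaussianMat (d (ℓ + 1)) (d ℓ))
      {V | ¬ (IsOrthonormal ε B (netLayer σ d n (extendWeights V) X0 ℓ) →
        IsOrthonormal ε' B' (netLayer σ d n (extendWeights V) X0 (ℓ + 1)))} ≤ p := by
  have hmeas (ε B : ℝ) (ℓ : ℕ) : MeasurableSet
      {V : (ℓ : Fin L) → Fin (d (ℓ + 1)) → Fin (d ℓ) → ℝ |
        IsOrthonormal ε B (netLayer σ d n (extendWeights V) X0 ℓ)} :=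
    ((isClosed_isOrthonormal ε B).preimage
      (continuous_netLayer_extendWeights hσ X0 ℓ)).measurableSet
  refine measure_pi_le_of_forall_update ⟨ℓ, hℓ⟩ ((hmeas ε B ℓ).imp (hmeas ε' B' (ℓ + 1))).compl
    fun V => ?_
  by_cases hV : IsOrthonormal ε B (netLayer σ d n (extendWeights V) X0 ℓ)
  · refine (measure_mono fun w hw => ?_).trans (h _ hV)
    rw [Set.mem_ofPred_eq, ← netLayer_extendWeights_update_succ hℓ V X0 w]
    exact (Classical.not_imp.1 hw).2
  · refine (measure_mono (t := ∅) fun w hw => hV ?_).trans (measure_empty.trans_le zero_le)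
    rw [← netLayer_extendWeights_update_self hℓ V X0 w]
    exact (Classical.not_imp.1 hw).1

end Network

section Calculus

theorem contDiff_one_of_hasDerivAt {f f' : ℝ → ℝ} (hf : ∀ x, HasDerivAt f (f' x) x)
    (hf' : Continuous f') : ContDiff ℝ 1 f := by
  rw [contDiff_one_iff_deriv, deriv_eq hf]
  exact ⟨fun x => (hf x).differentiableAt, hf'⟩

theorem lipschitzWith_toNNReal_of_hasDerivAt_of_abs_le {f f' : ℝ → ℝ} {C : ℝ}
    (hf : ∀ x, HasDerivAt f (f' x) x) (hC : ∀ x, |f' x| ≤ C) : LipschitzWith C.toNNReal f :=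
  lipschitzWith_of_nnnorm_deriv_le (fun x => (hf x).differentiableAt) fun x => by
    rw [(hf x).deriv]
    exact NNReal.le_toNNReal_of_coe_le (hC x)

theorem isBigO_of_tendsto_div_of_ne_zero {α : Type*} {l : Filter α} {f g : α → ℝ} {c : ℝ}
    (hc : c ≠ 0) (h : Tendsto (fun x => f x / g x) l (𝓝 c)) : f =O[l] g :=
  Asymptotics.isBigO_of_div_tendsto_nhds_of_ne_zero
    (by simpa only [inv_div] using h.inv₀ hc) (inv_ne_zero hc)

end Calculus

section Induction

theorem tendsto_rpow_add_const_mul_mul_rpow {e : ℕ → ℝ} (k : ℝ)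
    (he : Tendsto (fun n : ℕ => e n * (n : ℝ) ^ (1 / 4 : ℝ)) atTop (𝓝 0)) :
    Tendsto (fun n : ℕ => ((n : ℝ) ^ (-3 / 8 : ℝ) + k * e n) * (n : ℝ) ^ (1 / 4 : ℝ))
      atTop (𝓝 0) := by
  have hpow : Tendsto (fun n : ℕ => (n : ℝ) ^ (-(1 / 8) : ℝ)) atTop (𝓝 0) :=
    (tendsto_rpow_neg_atTop (by norm_num)).comp tendsto_natCast_atTop_atTop
  have hsum := hpow.add (he.const_mul k)
  rw [mul_zero, add_zero] at hsum
  refine hsum.congr' ?_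
  filter_upwards [eventually_ne_atTop 0] with n hn
  have hexp : (n : ℝ) ^ (-(1 / 8) : ℝ) = (n : ℝ) ^ (-3 / 8 : ℝ) * (n : ℝ) ^ (1 / 4 : ℝ) := by
    rw [← Real.rpow_add (by positivity)]
    norm_num
  rw [hexp]
  ring

theorem eventually_le_half_of_tendsto_mul_rpow {e : ℕ → ℝ}
    (he : Tendsto (fun n : ℕ => e n * (n : ℝ) ^ (1 / 4 : ℝ)) atTop (𝓝 0)) :
    ∀ᶠ n in atTop, e n ≤ 1 / 2 := by
  filter_upwards [he.eventually_le_const (by norm_num : (0 : ℝ) < 1 / 2), eventually_ge_atTop 1]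
    with n hen hn
  by_contra! h
  have hpow : 1 ≤ (n : ℝ) ^ (1 / 4 : ℝ) := Real.one_le_rpow (by exact_mod_cast hn) (by norm_num)
  nlinarith

variable {σ : ℝ → ℝ} {Λ : NNReal} {L ℓ : ℕ} {d : ℕ → ℕ → ℕ}
  {Ω : Type*} [MeasurableSpace Ω] {Pr : Measure Ω}
  {W : (n : ℕ) → (ℓ : ℕ) → Ω → Fin (d n (ℓ + 1)) → Fin (d n ℓ) → ℝ}
  {X0 : (n : ℕ) → Matrix (Fin (d n 0)) (Fin n) ℝ}

theorem exists_withHighProb_isOrthonormal_netLayer_imp_succ (hσ : ContDiff ℝ 1 σ)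
    (hΛ : LipschitzWith Λ σ) (hmean : ∫ s, σ s ∂stdGaussian = 0)
    (hvar : ∫ s, σ s ^ 2 ∂stdGaussian = 1)
    (hW : ∀ n, Measure.map (fun ω (ℓ : Fin L) => W n ℓ ω) Pr =
      Measure.pi fun ℓ : Fin L => gaussianMat (d n (ℓ + 1)) (d n ℓ))
    (hℓ : ℓ < L) (hdim : (fun n : ℕ => (n : ℝ)) =O[atTop] fun n => (d n (ℓ + 1) : ℝ))
    {e : ℕ → ℝ} (he : ∀ᶠ n in atTop, e n ≤ 1 / 2) (b : ℝ) :
    ∃ b', WithHighProb Pr fun n ω =>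
      IsOrthonormal (e n) b (netLayer σ (d n) n (fun k => W n k ω) (X0 n) ℓ) →
        IsOrthonormal ((n : ℝ) ^ (-3 / 8 : ℝ) + Λ * (Λ + 2) ^ 2 * e n) b'
          (netLayer σ (d n) n (fun k => W n k ω) (X0 n) (ℓ + 1)) := by
  obtain ⟨Γ, hΓ, hbound⟩ := hdim.exists_pos
  obtain ⟨b', K, hlayer⟩ := exists_measure_not_isOrthonormal_layer_le hσ hΛ hmean hvar hΓ b
  refine ⟨b', withHighProb_of_eventually_le (K := K) ?_⟩
  filter_upwards [hlayer, hbound.bound, he] with n hlayer hnd hen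
  rw [Real.norm_natCast, Real.norm_natCast] at hnd
  have hmeas : AEMeasurable (fun ω (ℓ : Fin L) => W n ℓ ω) Pr :=
    aemeasurable_of_map_neZero (by rw [hW n]; infer_instance)
  have hpi := measure_isOrthonormal_and_not_isOrthonormal_succ_le hσ.continuous hℓ (X0 n)
    (hlayer _ _ hnd _ hen)
  have hcongr (ω : Ω) {k : ℕ} (hk : k ≤ L) :
      netLayer σ (d n) n (extendWeights fun ℓ : Fin L => W n ℓ ω) (X0 n) k =
        netLayer σ (d n) n (fun k => W n k ω) (X0 n) k :=
    netLayer_congr (X0 n) fun j hj => dif_pos (hj.trans_le hk)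
  rw [← hW n] at hpi
  refine (measure_mono fun ω hω => ?_).trans ((Measure.le_map_apply hmeas _).trans hpi)
  rw [Set.mem_preimage, Set.mem_ofPred_eq, hcongr ω hℓ.le, hcongr ω hℓ]
  exact hω

variable [IsFiniteMeasure Pr]

theorem exists_withHighProb_forall_le_isOrthonormal_netLayer (hσ : ContDiff ℝ 1 σ)
    (hΛ : LipschitzWith Λ σ) (hmean : ∫ s, σ s ∂stdGaussian = 0)
    (hvar : ∫ s, σ s ^ 2 ∂stdGaussian = 1)
    (hW : ∀ n, Measure.map (fun ω (ℓ : Fin L) => W n ℓ ω) Pr =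
      Measure.pi fun ℓ : Fin L => gaussianMat (d n (ℓ + 1)) (d n ℓ))
    {ε : ℕ → ℝ} {B : ℝ} (hX0 : ∀ n, IsOrthonormal (ε n) B (X0 n))
    (hε : Tendsto (fun n : ℕ => ε n * (n : ℝ) ^ (1 / 4 : ℝ)) atTop (𝓝 0))
    (hdim : ∀ ℓ < L, (fun n : ℕ => (n : ℝ)) =O[atTop] fun n => (d n (ℓ + 1) : ℝ))
    (hℓ : ℓ ≤ L) :
    ∃ (e : ℕ → ℝ) (b : ℝ), Tendsto (fun n : ℕ => e n * (n : ℝ) ^ (1 / 4 : ℝ)) atTop (𝓝 0) ∧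
      WithHighProb Pr fun n ω => ∀ k ≤ ℓ,
        IsOrthonormal (e n) b (netLayer σ (d n) n (fun k => W n k ω) (X0 n) k) := by
  induction ℓ with
  | zero =>
    refine ⟨ε, B, hε, withHighProb_of_eventually_le (K := 0) (.of_forall fun n => ?_)⟩
    simp [netLayer, hX0 n]
  | succ ℓ ih =>
    obtain ⟨e, b, he, hprob⟩ := ih (by omega)
    obtain ⟨b', hsucc⟩ := exists_withHighProb_isOrthonormal_netLayer_imp_succ hσ hΛ hmean hvar hW
      hℓ (hdim ℓ hℓ) (eventually_le_half_of_tendsto_mul_rpow he) b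
    refine ⟨fun n => max (e n) ((n : ℝ) ^ (-3 / 8 : ℝ) + Λ * (Λ + 2) ^ 2 * e n), max b b', ?_,
      hprob.mp (hsucc.mono fun n ω hsucc hprob k hk => ?_)⟩
    · have hmax := he.max (tendsto_rpow_add_const_mul_mul_rpow (Λ * (Λ + 2) ^ 2) he)
      rw [max_self] at hmax
      exact hmax.congr fun n => (max_mul_of_nonneg _ _ (by positivity)).symm
    · obtain hk | rfl := Nat.le_succ_iff.1 hk
      · exact (hprob k hk).mono (le_max_left _ _) (le_max_left _ _)
      · exact (hsucc (hprob ℓ le_rfl)).mono (le_max_right _ _) (le_max_right _ _)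

end Induction

theorem orthonormal_induction_general {L : ℕ} {d : ℕ → ℕ → ℕ} {σ : ℝ → ℝ} {Λ : NNReal}
    (hσ : ContDiff ℝ 1 σ) (hΛ : LipschitzWith Λ σ) (hmean : ∫ x, σ x ∂stdGaussian = 0)
    (hvar : ∫ x, σ x ^ 2 ∂stdGaussian = 1)
    {Ω : Type*} [MeasurableSpace Ω] {Pr : Measure Ω} [IsFiniteMeasure Pr]
    {W : (n : ℕ) → (ℓ : ℕ) → Ω → Fin (d n (ℓ + 1)) → Fin (d n ℓ) → ℝ}
    (hW : ∀ n, Measure.map (fun ω (ℓ : Fin L) => W n ℓ ω) Pr =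
      Measure.pi fun ℓ : Fin L => gaussianMat (d n (ℓ + 1)) (d n ℓ))
    {X0 : (n : ℕ) → Matrix (Fin (d n 0)) (Fin n) ℝ} {ε : ℕ → ℝ} {B : ℝ}
    (hX0 : ∀ n, IsOrthonormal (ε n) B (X0 n))
    (hε : Tendsto (fun n : ℕ => ε n * (n : ℝ) ^ (1 / 4 : ℝ)) atTop (𝓝 0))
    (hdim : ∀ ℓ < L, (fun n : ℕ => (n : ℝ)) =O[atTop] fun n => (d n (ℓ + 1) : ℝ)) :
    ∃ (ε' : ℕ → ℝ) (B' : ℝ),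
      Tendsto (fun n : ℕ => ε' n * (n : ℝ) ^ (1 / 4 : ℝ)) atTop (𝓝 0) ∧
      ∀ᵐ ω ∂Pr, ∀ᶠ n in atTop, ∀ ℓ ≤ L,
        IsOrthonormal (ε' n) B' (netLayer σ (d n) n (fun k => W n k ω) (X0 n) ℓ) := by
  obtain ⟨ε', B', hε', hprob⟩ := exists_withHighProb_forall_le_isOrthonormal_netLayer hσ hΛ hmean
    hvar hW hX0 hε hdim le_rfl
  exact ⟨ε', B', hε', hprob.ae_eventually⟩

theorem orthonormal_induction
    (L : ℕ) (hL : 1 ≤ L)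
    (d : ℕ → ℕ → ℕ)
    (σ σ' σ'' : ℝ → ℝ) (lamσ : ℝ)
    (hderiv1 : ∀ x, HasDerivAt σ (σ' x) x)
    (hderiv2 : ∀ x, HasDerivAt σ' (σ'' x) x)
    (hσ'bdd : ∀ x, |σ' x| ≤ lamσ) (hσ''bdd : ∀ x, |σ'' x| ≤ lamσ)
    (hmean : (∫ x, σ x ∂stdGaussian) = 0)
    (hvar : (∫ x, (σ x) ^ 2 ∂stdGaussian) = 1)
    (Ω : Type*) [MeasurableSpace Ω] (Pr : Measure Ω) [IsProbabilityMeasure Pr]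
    (W : (n : ℕ) → (ℓ : ℕ) → Ω → Fin (d n (ℓ + 1)) → Fin (d n ℓ) → ℝ)
    (hW : ∀ n : ℕ, Measure.map (fun ω => fun ℓ : Fin L => W n ℓ ω) Pr =
      Measure.pi (fun ℓ : Fin L => gaussianMat (d n ((ℓ : ℕ) + 1)) (d n (ℓ : ℕ))))
    (X0 : (n : ℕ) → Matrix (Fin (d n 0)) (Fin n) ℝ)
    (ε : ℕ → ℝ) (B : ℝ)
    (hX0orth : ∀ n, IsOrthonormal (ε n) B (X0 n))
    (hε : Tendsto (fun n : ℕ => ε n * (n : ℝ) ^ ((1 : ℝ) / 4)) atTop (𝓝 0))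
    (γ : ℕ → ℝ) (hγ : ∀ ℓ, 1 ≤ ℓ → ℓ ≤ L → 0 < γ ℓ)
    (hdim : ∀ ℓ, 1 ≤ ℓ → ℓ ≤ L →
      Tendsto (fun n : ℕ => (n : ℝ) / (d n ℓ : ℝ)) atTop (𝓝 (γ ℓ))) :
    ∃ (ε' : ℕ → ℝ) (B' : ℝ),
      Tendsto (fun n : ℕ => ε' n * (n : ℝ) ^ ((1 : ℝ) / 4)) atTop (𝓝 0) ∧
      ∀ᵐ ω ∂Pr, ∀ᶠ n : ℕ in atTop, ∀ ℓ ≤ L,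
        IsOrthonormal (ε' n) B' (netLayer σ (d n) n (fun m => W n m ω) (X0 n) ℓ) := by
  have hσ'cont : Continuous σ' := continuous_iff_continuousAt.2 fun x => (hderiv2 x).continuousAt
  exact orthonormal_induction_general (contDiff_one_of_hasDerivAt hderiv1 hσ'cont)
    (lipschitzWith_toNNReal_of_hasDerivAt_of_abs_le hderiv1 hσ'bdd) hmean hvar hW hX0orth hε
    fun ℓ hℓ => isBigO_of_tendsto_div_of_ne_zero (hγ (ℓ + 1) (by omega) hℓ).ne'
      (hdim (ℓ + 1) (by omega) hℓ)
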